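/- arXiv:1201.1139 — 9 statements merged into one kernel-verified Lean document; each statement's English description precedes it below -/
import Mathlib

section
/- Let G be a finite group, let α ≥ 1 be a real number, and let A, B be nonempty subsets of G satisfying E(A,B) ≥ α^(−1)·(|A|·|B|)^(3/2). Then |A| ≤ α²·|B|, and there exist a subset H ⊆ G and elements x, y ∈ G such that: (i) H is a (2^1861·α^720)-approximate subgroup of G; (ii) |H| ≤ 2^325·α^126·|A|; (iii) |A ∩ xH| ≥ 2^(−2424)·α^(−937)·|A| and |B ∩ Hy| ≥ 2^(−2424)·α^(−937)·|B|; and (iv) |H·H·H| ≤ 2^930·α^360·|H|. -/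
open Pointwise

/-- The multiplicative energy `E(A,B)`: the number of quadruples
`(a₁,a₂,b₁,b₂) ∈ A×A×B×B` with `a₁b₁ = a₂b₂`. -/
def mulE {G : Type*} [Group G] [DecidableEq G] (A B : Finset G) : ℕ :=
  (((A ×ˢ A) ×ˢ B ×ˢ B).filter fun q => q.1.1 * q.2.1 = q.1.2 * q.2.2).card

/-- `H` is a `K`-approximate subgroup of `G`: `H` is symmetric, contains the identity,
and there is a symmetric set `X ⊆ H·H` with `|X| ≤ K` and `H·H ⊆ X·H`. -/
def IsApproxSubgroup {G : Type*} [Group G] [DecidableEq G] (K : ℝ) (H : Finset G) : Prop :=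
  (1 : G) ∈ H ∧ (∀ h ∈ H, h⁻¹ ∈ H) ∧
    ∃ X : Finset G, (∀ v ∈ X, v⁻¹ ∈ X) ∧ X ⊆ H * H ∧ (X.card : ℝ) ≤ K ∧ H * H ⊆ X * H

/-!
Let `P` be the set of popular products of `A` and `B`, each having at least `√(|A||B|) / (2α)`
representations. The pairs `(a, b)` with `a * b ∈ P` form a dense bipartite graph, and dependent
random choice yields a large `A' ⊆ A` any two elements of which are joined by many paths of length
four. Such a path writes `x * y⁻¹` as a product of four elements of `P ∪ P⁻¹`, so `A' * A'⁻¹` is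
small, while `A'` still has large energy with `B`.

Now let `S` be the set of popular elements of `A'⁻¹ * A'`. It is symmetric, and since every element
of `S` has many representations, `|A' * S ^ k|` grows by only a constant factor with each step, so
all powers of `S` have size comparable to `|A'|`. By Ruzsa covering, `H = S * S` is an approximate
subgroup. The smallness of `A' * A'⁻¹` and the energy of `A'` and `B` put a positive proportion of
the quotients of `A'⁻¹ * A'` and of `B * B⁻¹` into `S`, and by pigeonhole a translate of `S` meets
`A'`, respectively `B`, in a positive proportion of its elements.
-/

section DependentRandomChoice

open Finset

lemma card_mul_le_card_of_forall_le_card_fiber {ι κ : Type*} [DecidableEq κ] (s : Finset ι)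
    (t : Finset κ) (f : ι → κ) {m : ℝ} (h : ∀ k ∈ t, m ≤ #{i ∈ s | f i = k}) :
    #t * m ≤ #s :=
  calc (#t : ℝ) * m = #t • m := (nsmul_eq_mul _ _).symm
    _ ≤ ∑ k ∈ t, (#{i ∈ s | f i = k} : ℝ) := card_nsmul_le_sum _ _ _ h
    _ = #{i ∈ s | f i ∈ t} := mod_cast sum_card_fiberwise_eq_card_filter s t f
    _ ≤ #s := mod_cast card_filter_le _ _

variable {X Y : Type*} (r : X → Y → Prop) [DecidableRel r] {A : Finset X} {B : Finset Y}

lemma card_filter_product_eq_sum_left (A : Finset X) (B : Finset Y) :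
    #{p ∈ A ×ˢ B | r p.1 p.2} = ∑ a ∈ A, #{b ∈ B | r a b} := by
  simp_rw [card_filter, sum_product]

lemma card_filter_product_eq_sum_right (A : Finset X) (B : Finset Y) :
    #{p ∈ A ×ˢ B | r p.1 p.2} = ∑ b ∈ B, #{a ∈ A | r a b} := by
  simp_rw [card_filter, sum_product_right]

/-- The number of common neighbours in `B` of the vertices `x` and `z` of the bipartite graph `r`,
which counts the paths of length two from `x` to `z` through `B`. -/
def codegree (B : Finset Y) (x z : X) : ℕ := #{b ∈ B | r x b ∧ r z b}

lemma sum_card_codegree_lt_le {d : ℝ} (hd : 0 ≤ d) (A : Finset X) (B : Finset Y) :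
    ∑ b ∈ B, (#{p ∈ {a ∈ A | r a b} ×ˢ {a ∈ A | r a b} | (codegree r B p.1 p.2 : ℝ) < d} : ℝ)
      ≤ #A ^ 2 * d := by
  set low := {p ∈ A ×ˢ A | (codegree r B p.1 p.2 : ℝ) < d}
  have hswap : ∑ b ∈ B, #{p ∈ {a ∈ A | r a b} ×ˢ {a ∈ A | r a b} | (codegree r B p.1 p.2 : ℝ) < d}
      = ∑ p ∈ low, codegree r B p.1 p.2 := by
    have hright := card_filter_product_eq_sum_right (fun p b ↦ r p.1 b ∧ r p.2 b) low B
    refine Eq.trans (sum_congr rfl fun b _ ↦ congrArg card ?_)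
      (hright.symm.trans (card_filter_product_eq_sum_left (fun p b ↦ r p.1 b ∧ r p.2 b) low B))
    ext p
    simp only [low, mem_filter, mem_product]
    tauto
  calc _ = ∑ p ∈ low, (codegree r B p.1 p.2 : ℝ) := mod_cast hswap
    _ ≤ #low • d := sum_le_card_nsmul _ _ _ fun p hp ↦ (mem_filter.1 hp).2.le
    _ = #low * d := nsmul_eq_mul _ _
    _ ≤ #A ^ 2 * d := by
      gcongr
      exact_mod_cast (card_filter_le _ _).trans_eq (by rw [card_product, sq])

-- Averaging `|N(b)|² - 8 |bad pairs in N(b)|` over `b`: the first term is controlled from below by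
-- Cauchy-Schwarz, and a pair of low codegree lies in few neighbourhoods `N(b)`.
lemma exists_neighborhood_few_codegree_lt {K : ℝ} (hK : 0 < K) (hB : B.Nonempty)
    (h : (#A * #B : ℝ) ≤ K * #{p ∈ A ×ˢ B | r p.1 p.2}) :
    ∃ b ∈ B, (#A : ℝ) ≤ 2 * K * #{a ∈ A | r a b} ∧
      8 * #{p ∈ {a ∈ A | r a b} ×ˢ {a ∈ A | r a b} |
        (codegree r B p.1 p.2 : ℝ) < #B / (16 * K ^ 2)} ≤ #{a ∈ A | r a b} ^ 2 := by
  set N : Y → ℝ := fun b ↦ #{a ∈ A | r a b}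
  set bad : Y → ℝ := fun b ↦ #{p ∈ {a ∈ A | r a b} ×ˢ {a ∈ A | r a b} |
    (codegree r B p.1 p.2 : ℝ) < #B / (16 * K ^ 2)}
  have hBpos : (0 : ℝ) < #B := mod_cast hB.card_pos
  have hbad : 16 * K ^ 2 * ∑ b ∈ B, bad b ≤ #A ^ 2 * #B := by
    have := sum_card_codegree_lt_le r (d := #B / (16 * K ^ 2)) (by positivity) A B
    rwa [← mul_div_assoc, le_div_iff₀' (by positivity)] at this
  have hN : (#A : ℝ) ^ 2 * #B ≤ K ^ 2 * ∑ b ∈ B, N b ^ 2 := by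
    refine le_of_mul_le_mul_right ?_ hBpos
    calc (#A : ℝ) ^ 2 * #B * #B = (#A * #B) ^ 2 := by ring
      _ ≤ (K * ∑ b ∈ B, N b) ^ 2 := by
        rw [card_filter_product_eq_sum_right, Nat.cast_sum] at h
        exact pow_le_pow_left₀ (by positivity) h 2
      _ ≤ K ^ 2 * (#B * ∑ b ∈ B, N b ^ 2) := by
        rw [mul_pow]
        gcongr
        exact sq_sum_le_card_mul_sum_sq
      _ = K ^ 2 * (∑ b ∈ B, N b ^ 2) * #B := by ring
  obtain ⟨b, hb, hav⟩ : ∃ b ∈ B, (#A : ℝ) ^ 2 ≤ 2 * K ^ 2 * (N b ^ 2 - 8 * bad b) := by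
    refine exists_le_of_sum_le hB ?_
    rw [sum_const, nsmul_eq_mul, ← mul_sum, sum_sub_distrib, ← mul_sum]
    linarith
  have hbad0 : 0 ≤ bad b := Nat.cast_nonneg _
  refine ⟨b, hb, le_of_sq_le_sq ?_ (by positivity), ?_⟩
  · calc (#A : ℝ) ^ 2 ≤ 2 * K ^ 2 * (N b ^ 2 - 8 * bad b) := hav
      _ ≤ 4 * K ^ 2 * N b ^ 2 := by nlinarith [mul_nonneg (sq_nonneg K) (sq_nonneg (N b))]
      _ = (2 * K * N b) ^ 2 := by ring
  · have : 0 ≤ N b ^ 2 - 8 * bad b :=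
      nonneg_of_mul_nonneg_right ((sq_nonneg _).trans hav) (by positivity)
    have : 8 * bad b ≤ N b ^ 2 := by linarith
    simp only [N, bad] at this
    exact_mod_cast this

lemma exists_subset_forall_card_le_of_few_bad_pairs (V : Finset X)
    (bad : X → X → Prop) [DecidableRel bad] (h : 8 * #{p ∈ V ×ˢ V | bad p.1 p.2} ≤ #V ^ 2) :
    ∃ W ⊆ V, #V ≤ 2 * #W ∧
      ∀ x ∈ W, ∀ y ∈ W, #V ≤ 2 * #{z ∈ V | ¬ bad x z ∧ ¬ bad y z} := by
  classical
  set heavy := {x ∈ V | #V < 4 * #{z ∈ V | bad x z}}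
  have hheavy : 2 * #heavy ≤ #V := by
    have hsum : #heavy * #V ≤ 4 * #{p ∈ V ×ˢ V | bad p.1 p.2} := by
      calc #heavy * #V ≤ ∑ x ∈ heavy, 4 * #{z ∈ V | bad x z} :=
            card_nsmul_le_sum _ _ _ fun x hx ↦ (mem_filter.1 hx).2.le
        _ ≤ ∑ x ∈ V, 4 * #{z ∈ V | bad x z} := sum_le_sum_of_subset (filter_subset _ _)
        _ = 4 * #{p ∈ V ×ˢ V | bad p.1 p.2} := by
          rw [card_filter_product_eq_sum_left, mul_sum]
    obtain hV | hV := (#V).eq_zero_or_pos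
    · have : #heavy ≤ #V := card_filter_le _ _
      lia
    · exact le_of_mul_le_mul_right (by nlinarith) hV
  refine ⟨V \ heavy, sdiff_subset, ?_, fun x hx y hy ↦ ?_⟩
  · have := card_sdiff_add_card_eq_card (filter_subset _ _ : heavy ⊆ V)
    lia
  · have light : ∀ x ∈ V \ heavy, 4 * #{z ∈ V | bad x z} ≤ #V := by
      intro x hx
      obtain ⟨hxV, hx⟩ := mem_sdiff.1 hx
      exact not_lt.1 fun hlt ↦ hx (mem_filter.2 ⟨hxV, hlt⟩)
    have hcover : V ⊆ {z ∈ V | ¬ bad x z ∧ ¬ bad y z} ∪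
        ({z ∈ V | bad x z} ∪ {z ∈ V | bad y z}) := by
      intro z hz
      simp only [mem_union, mem_filter]
      tauto
    have hcard := (card_le_card hcover).trans <| (card_union_le _ _).trans <|
      Nat.add_le_add_left (card_union_le _ _) _
    have := light x hx
    have := light y hy
    lia

theorem exists_subset_forall_card_codegree_ge {K : ℝ} (hK : 0 < K)
    (hB : B.Nonempty) (h : (#A * #B : ℝ) ≤ K * #{p ∈ A ×ˢ B | r p.1 p.2}) :
    ∃ A' ⊆ A, (#A : ℝ) ≤ 4 * K * #A' ∧ ∀ x ∈ A', ∀ y ∈ A', (#A : ℝ) ≤ 4 * K *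
      #{z ∈ A | #B / (16 * K ^ 2) ≤ codegree r B x z ∧ #B / (16 * K ^ 2) ≤ codegree r B y z} := by
  obtain ⟨b, -, hN, hbad⟩ := exists_neighborhood_few_codegree_lt r hK hB h
  obtain ⟨A', hA', hcard, hgood⟩ := exists_subset_forall_card_le_of_few_bad_pairs _
    (fun x z ↦ (codegree r B x z : ℝ) < #B / (16 * K ^ 2)) hbad
  have hlarge {m : ℕ} (hm : #{a ∈ A | r a b} ≤ 2 * m) : (#A : ℝ) ≤ 4 * K * m := by
    have : (#{a ∈ A | r a b} : ℝ) ≤ 2 * m := mod_cast hm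
    calc (#A : ℝ) ≤ 2 * K * #{a ∈ A | r a b} := hN
      _ ≤ 2 * K * (2 * m) := by gcongr
      _ = 4 * K * m := by ring
  refine ⟨A', hA'.trans (filter_subset _ _), hlarge hcard, fun x hx y hy ↦
    hlarge ((hgood x hx y hy).trans (Nat.mul_le_mul_left 2 (card_le_card ?_)))⟩
  simp only [not_lt]
  exact filter_subset_filter _ (filter_subset _ _)

end DependentRandomChoice

section BalogSzemerediGowers

open Finset

variable {G : Type*} [Group G] [DecidableEq G] {A A' B P : Finset G}

-- A path `x, b, z, c, y` with `x, y, z ∈ A`, `b, c ∈ B` and all edge products in `P` writes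
-- `x * y⁻¹` as `(x * b) * (z * b)⁻¹ * ((z * c) * (y * c)⁻¹)`, and is determined by these four
-- elements of `P` once `x` and `y` are known.
lemma le_card_representations_of_forall_le_codegree {s d : ℝ} (hd : 0 ≤ d) {x y : G}
    (h : s ≤ #{z ∈ A | d ≤ codegree (fun a b ↦ a * b ∈ P) B x z ∧
      d ≤ codegree (fun a b ↦ a * b ∈ P) B y z}) :
    s * d ^ 2 ≤ #{p ∈ (P ×ˢ P) ×ˢ (P ×ˢ P) |
      p.1.1 * p.1.2⁻¹ * (p.2.1 * p.2.2⁻¹) = x * y⁻¹} := by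
  refine (mul_le_mul_of_nonneg_right h (by positivity)).trans <|
    card_mul_le_card_of_forall_le_card_fiber _ _ (fun p ↦ p.1.2 * p.1.1⁻¹ * x) fun z hz ↦ ?_
  obtain ⟨-, hxz, hyz⟩ := mem_filter.1 hz
  calc d ^ 2 = d * d := sq d
    _ ≤ codegree _ B x z * codegree _ B y z := by gcongr
    _ = #({b ∈ B | x * b ∈ P ∧ z * b ∈ P} ×ˢ {c ∈ B | y * c ∈ P ∧ z * c ∈ P}) := by
      rw [card_product, Nat.cast_mul]
      rfl
    _ ≤ _ := by
      refine Nat.cast_le.2 <| card_le_card_of_injOn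
        (fun q ↦ ((x * q.1, z * q.1), (z * q.2, y * q.2))) ?_ fun q _ q' _ hqq' ↦ ?_
      · rintro ⟨b, c⟩ hbc
        simp only [coe_product, Set.mem_prod, mem_coe, mem_filter] at hbc
        simp only [mem_coe, mem_filter, mem_product]
        exact ⟨⟨⟨⟨hbc.1.2.1, hbc.1.2.2⟩, hbc.2.2.2, hbc.2.2.1⟩, by group⟩, by group⟩
      · simp only [Prod.mk.injEq, mul_right_inj] at hqq'
        exact Prod.ext hqq'.1.1 hqq'.2.1

lemma card_mul_inv_mul_le_card_pow_four {s d : ℝ} (hd : 0 ≤ d)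
    (h : ∀ x ∈ A', ∀ y ∈ A', s ≤ #{z ∈ A | d ≤ codegree (fun a b ↦ a * b ∈ P) B x z ∧
      d ≤ codegree (fun a b ↦ a * b ∈ P) B y z}) :
    #(A' * A'⁻¹) * (s * d ^ 2) ≤ #P ^ 4 := by
  calc #(A' * A'⁻¹) * (s * d ^ 2) ≤ #((P ×ˢ P) ×ˢ (P ×ˢ P)) := by
        refine card_mul_le_card_of_forall_le_card_fiber _ _
          (fun p ↦ p.1.1 * p.1.2⁻¹ * (p.2.1 * p.2.2⁻¹)) fun g hg ↦ ?_
        obtain ⟨x, hx, y', hy', rfl⟩ := mem_mul.1 hg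
        obtain ⟨y, hy, rfl⟩ := mem_inv.1 hy'
        exact le_card_representations_of_forall_le_codegree hd (h x hx y hy)
    _ = #P ^ 4 := by
      simp only [card_product]
      push_cast
      ring

theorem exists_subset_card_mul_inv_le_of_graph {K : ℝ} (hK : 0 < K) (hA : A.Nonempty)
    (hB : B.Nonempty) (h : (#A * #B : ℝ) ≤ K * #{p ∈ A ×ˢ B | p.1 * p.2 ∈ P}) :
    ∃ A' ⊆ A, (#A : ℝ) ≤ 4 * K * #A' ∧
      (#A' * #B : ℝ) ≤ 16 * K ^ 2 * #{p ∈ A' ×ˢ B | p.1 * p.2 ∈ P} ∧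
      (#(A' * A'⁻¹) * (#A * #B ^ 2) : ℝ) ≤ 2 ^ 10 * K ^ 5 * #P ^ 4 := by
  obtain ⟨A', hA'A, hcard, hpaths⟩ :=
    exists_subset_forall_card_codegree_ge (fun a b ↦ a * b ∈ P) hK hB h
  have hApos : (0 : ℝ) < #A := mod_cast hA.card_pos
  refine ⟨A', hA'A, hcard, ?_, ?_⟩
  · have hdeg : ∀ x ∈ A', (#B / (16 * K ^ 2) : ℝ) ≤ #{b ∈ B | x * b ∈ P} := by
      intro x hx
      have hpos := pos_of_mul_pos_right (hApos.trans_le (hpaths x hx x hx)) (by positivity)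
      obtain ⟨z, hz⟩ := card_pos.1 (Nat.cast_pos.1 hpos)
      exact (mem_filter.1 hz).2.1.trans <|
        Nat.cast_le.2 (card_le_card (monotone_filter_right _ fun b _ hb ↦ hb.1))
    have hsum := card_nsmul_le_sum _ _ _ hdeg
    rw [nsmul_eq_mul, ← Nat.cast_sum,
      ← card_filter_product_eq_sum_left (fun a b ↦ a * b ∈ P), ← mul_div_assoc,
      div_le_iff₀' (by positivity)] at hsum
    exact hsum
  · have hcount := card_mul_inv_mul_le_card_pow_four (s := #A / (4 * K)) (P := P)
      (d := #B / (16 * K ^ 2)) (by positivity) fun x hx y hy ↦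
        (div_le_iff₀' (by positivity)).2 (hpaths x hx y hy)
    calc (#(A' * A'⁻¹) * (#A * #B ^ 2) : ℝ) = 2 ^ 10 * K ^ 5 *
          (#(A' * A'⁻¹) * (#A / (4 * K) * (#B / (16 * K ^ 2)) ^ 2)) := by field_simp; ring
      _ ≤ 2 ^ 10 * K ^ 5 * #P ^ 4 := by gcongr

end BalogSzemerediGowers

section PopularProducts

open Finset

variable {G : Type*} [Group G] [DecidableEq G] {A B : Finset G}

/-- The elements of `A * B` with at least `t` representations as a product `a * b`. -/
noncomputable def popularProducts (A B : Finset G) (t : ℝ) : Finset G :=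
  {g ∈ A * B | t ≤ A.convolution B g}

lemma sum_convolution (A B P : Finset G) :
    ∑ g ∈ P, A.convolution B g = #{p ∈ A ×ˢ B | p.1 * p.2 ∈ P} :=
  sum_card_fiberwise_eq_card_filter _ _ _

lemma sum_convolution_le (A B P : Finset G) :
    ∑ g ∈ P, (A.convolution B g : ℝ) ≤ #A * #B := by
  rw [← Nat.cast_sum, sum_convolution]
  exact_mod_cast (card_filter_le _ _).trans_eq (card_product A B)

lemma card_popularProducts_mul_le (A B : Finset G) (t : ℝ) :
    #(popularProducts A B t) * t ≤ #A * #B :=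
  calc #(popularProducts A B t) * t ≤ ∑ g ∈ popularProducts A B t, (A.convolution B g : ℝ) := by
        rw [← nsmul_eq_mul]
        exact card_nsmul_le_sum _ _ _ fun g hg ↦ (mem_filter.1 hg).2
    _ ≤ #A * #B := sum_convolution_le A B _

-- The unpopular products contribute at most `M / (2 * c) * F` to the weighted sum.
lemma le_sum_popularProducts {f : G → ℝ} (hf : ∀ g, 0 ≤ f g) {M F c : ℝ} (hM : 0 < M) (hc : 0 < c)
    (hAB : ∀ g, A.convolution B g ≤ M) (hF : ∑ g ∈ A * B, f g ≤ F)
    (h : M * F ≤ c * ∑ g ∈ A * B, A.convolution B g * f g) :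
    F ≤ 2 * c * ∑ g ∈ popularProducts A B (M / (2 * c)), f g := by
  set t := M / (2 * c)
  have hunpopular : ∑ g ∈ A * B with ¬ t ≤ A.convolution B g, A.convolution B g * f g ≤ t * F :=
    calc ∑ g ∈ A * B with ¬ t ≤ A.convolution B g, A.convolution B g * f g
        ≤ ∑ g ∈ A * B with ¬ t ≤ A.convolution B g, t * f g :=
          sum_le_sum fun g hg ↦ mul_le_mul_of_nonneg_right (not_le.1 (mem_filter.1 hg).2).le (hf g)
      _ ≤ ∑ g ∈ A * B, t * f g := sum_le_sum_of_subset_of_nonneg (filter_subset _ _)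
          fun g _ _ ↦ mul_nonneg (by positivity) (hf g)
      _ ≤ t * F := by
        rw [← mul_sum]
        gcongr
  have hpopular : ∑ g ∈ A * B with t ≤ A.convolution B g, A.convolution B g * f g
      ≤ M * ∑ g ∈ popularProducts A B t, f g := by
    rw [mul_sum]
    exact sum_le_sum fun g _ ↦ mul_le_mul_of_nonneg_right (hAB g) (hf g)
  have : M * F ≤ c * M * ∑ g ∈ popularProducts A B t, f g + M * F / 2 :=
    calc M * F ≤ c * ∑ g ∈ A * B, A.convolution B g * f g := h
      _ ≤ c * (M * ∑ g ∈ popularProducts A B t, f g + t * F) := by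
        rw [← sum_filter_add_sum_filter_not (A * B) (fun g ↦ t ≤ A.convolution B g)]
        gcongr
      _ = c * M * ∑ g ∈ popularProducts A B t, f g + M * F / 2 := by
        simp only [t]
        field_simp
  exact le_of_mul_le_mul_left (by linarith) hM

lemma mulEnergy_eq_sum_convolution_sq (A B : Finset G) :
    mulEnergy A B = ∑ g ∈ A * B, A.convolution B g ^ 2 :=
  mulEnergy_eq_sum_sq' A B

-- `a₁ * b₁ = a₂ * b₂` if and only if `a₂⁻¹ * a₁ = b₂ * b₁⁻¹`.
lemma mulEnergy_eq_sum_convolution_mul_convolution (A B : Finset G) :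
    mulEnergy A B = ∑ g ∈ A⁻¹ * A, A⁻¹.convolution A g * B.convolution B⁻¹ g := by
  rw [mulEnergy, card_eq_sum_card_fiberwise (f := fun q ↦ q.1.2⁻¹ * q.1.1) (t := A⁻¹ * A)]
  · refine sum_congr rfl fun g _ ↦ ?_
    rw [convolution, convolution, ← card_product]
    refine card_nbij' (fun q ↦ ((q.1.2⁻¹, q.1.1), (q.2.2, q.2.1⁻¹)))
      (fun p ↦ ((p.1.2, p.1.1⁻¹), (p.2.2⁻¹, p.2.1))) ?_ ?_ ?_ ?_
    · rintro ⟨⟨a₁, a₂⟩, b₁, b₂⟩ h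
      simp only [mem_coe, mem_product, mem_filter] at h ⊢
      obtain ⟨⟨⟨⟨ha₁, ha₂⟩, hb₁, hb₂⟩, heq⟩, rfl⟩ := h
      refine ⟨⟨⟨inv_mem_inv ha₂, ha₁⟩, rfl⟩, ⟨hb₂, inv_mem_inv hb₁⟩, ?_⟩
      rw [mul_inv_eq_iff_eq_mul, mul_assoc, heq, inv_mul_cancel_left]
    · rintro ⟨⟨u, a⟩, b, v⟩ h
      simp only [mem_coe, mem_product, mem_filter, mem_inv'] at h ⊢
      obtain ⟨⟨⟨hu, ha⟩, rfl⟩, ⟨hb, hv⟩, heq⟩ := h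
      refine ⟨⟨⟨⟨ha, hu⟩, hv, hb⟩, ?_⟩, by rw [inv_inv]⟩
      rw [mul_inv_eq_iff_eq_mul, mul_assoc, heq, inv_mul_cancel_left]
    all_goals
      intro p _
      simp only [inv_inv]
  · rintro q hq
    simp only [mem_coe, mem_filter, mem_product] at hq
    exact mul_mem_mul (inv_mem_inv hq.1.1.2) hq.1.1.1

lemma mulEnergy_le_mul_card_mul_card {M : ℝ} (h : ∀ g, A.convolution B g ≤ M) :
    mulEnergy A B ≤ M * (#A * #B) :=
  calc (mulEnergy A B : ℝ) = ∑ g ∈ A * B, (A.convolution B g : ℝ) * A.convolution B g := by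
        simp_rw [mulEnergy_eq_sum_convolution_sq, sq]
        push_cast
        rfl
    _ ≤ ∑ g ∈ A * B, M * A.convolution B g := by
      gcongr with g
      exact h g
    _ ≤ M * (#A * #B) := by
      rw [← mul_sum]
      have : 0 ≤ M := (Nat.cast_nonneg _).trans (h 1)
      gcongr
      exact sum_convolution_le A B _

end PopularProducts

section EnergyBalogSzemerediGowers

open Finset

variable {G : Type*} [Group G] [DecidableEq G] {A B : Finset G} {α n : ℝ}

lemma le_mul_of_pow_three_le_mulEnergy (hα : 0 < α) (hn : 0 < n) (hnAB : n ^ 2 = #A * #B)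
    (hE : n ^ 3 ≤ α * mulEnergy A B) {M : ℝ} (hM : ∀ g, A.convolution B g ≤ M) : n ≤ α * M := by
  refine le_of_mul_le_mul_right ?_ (pow_pos hn 2)
  calc n * n ^ 2 = n ^ 3 := by ring
    _ ≤ α * (M * (#A * #B)) := hE.trans (by gcongr; exact mulEnergy_le_mul_card_mul_card hM)
    _ = α * M * n ^ 2 := by rw [hnAB]; ring

lemma le_mul_card_left_of_pow_three_le_mulEnergy (hα : 0 < α) (hn : 0 < n)
    (hnAB : n ^ 2 = #A * #B) (hE : n ^ 3 ≤ α * mulEnergy A B) : n ≤ α * #A :=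
  le_mul_of_pow_three_le_mulEnergy hα hn hnAB hE fun _ ↦ mod_cast convolution_le_card_left

lemma card_le_sq_mul_card_of_pow_three_le_mulEnergy (hα : 0 < α) (hn : 0 < n)
    (hnAB : n ^ 2 = #A * #B) (hE : n ^ 3 ≤ α * mulEnergy A B) : (#A : ℝ) ≤ α ^ 2 * #B := by
  have hnB : n ≤ α * #B :=
    le_mul_of_pow_three_le_mulEnergy hα hn hnAB hE fun _ ↦ mod_cast convolution_le_card_right
  have hB : (0 : ℝ) < #B := pos_of_mul_pos_right (hn.trans_le hnB) hα.le
  refine le_of_mul_le_mul_right ?_ hB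
  calc (#A * #B : ℝ) = n ^ 2 := hnAB.symm
    _ ≤ (α * #B) ^ 2 := by gcongr
    _ = α ^ 2 * #B * #B := by ring

lemma card_mul_card_le_card_popularProducts_edges (hα : 0 < α) (hn : 0 < n)
    (hnAB : n ^ 2 = #A * #B) (hE : n ^ 3 ≤ α * mulEnergy A B) :
    (#A * #B : ℝ) ≤
      2 * α * #{p ∈ A ×ˢ B | p.1 * p.2 ∈ popularProducts A B (n / (2 * α))} := by
  have hconv (g : G) : (A.convolution B g : ℝ) ≤ n := by
    refine le_of_sq_le_sq ?_ hn.le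
    rw [hnAB, sq]
    exact_mod_cast Nat.mul_le_mul convolution_le_card_left convolution_le_card_right
  have hsum : n * (#A * #B) ≤ α * ∑ g ∈ A * B, (A.convolution B g : ℝ) * A.convolution B g := by
    rw [mulEnergy_eq_sum_convolution_sq] at hE
    push_cast at hE
    simp_rw [← hnAB, ← sq, ← pow_succ']
    exact hE
  rw [← sum_convolution, Nat.cast_sum]
  exact le_sum_popularProducts (fun _ ↦ Nat.cast_nonneg _) hn hα hconv
    (sum_convolution_le A B _) hsum

lemma card_popularProducts_le (hα : 0 < α) (hn : 0 < n) (hnAB : n ^ 2 = #A * #B) :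
    (#(popularProducts A B (n / (2 * α))) : ℝ) ≤ 2 * α * n := by
  have := (card_popularProducts_mul_le A B (n / (2 * α))).trans_eq hnAB.symm
  rw [← mul_div_assoc, div_le_iff₀ (by positivity)] at this
  exact le_of_mul_le_mul_right (this.trans_eq (by ring)) hn

lemma card_mul_card_sq_le_mulEnergy {P : Finset G} {c M : ℝ} (hA : A.Nonempty)
    (hedges : (#A * #B : ℝ) ≤ c * #{p ∈ A ×ˢ B | p.1 * p.2 ∈ P}) (hP : #P ≤ M * #A) :
    (#A * #B ^ 2 : ℝ) ≤ c ^ 2 * M * mulEnergy A B := by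
  refine le_of_mul_le_mul_left ?_ (Nat.cast_pos.2 hA.card_pos : (0 : ℝ) < #A)
  calc (#A * (#A * #B ^ 2) : ℝ) = (#A * #B) ^ 2 := by ring
    _ ≤ (c * #{p ∈ A ×ˢ B | p.1 * p.2 ∈ P}) ^ 2 := by gcongr
    _ = c ^ 2 * #{p ∈ A ×ˢ B | p.1 * p.2 ∈ P} ^ 2 := mul_pow _ _ _
    _ ≤ c ^ 2 * (#P * mulEnergy A B) := by
      gcongr
      exact_mod_cast card_sq_le_card_mul_mulEnergy A B P
    _ ≤ c ^ 2 * (M * #A * mulEnergy A B) := by gcongr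
    _ = #A * (c ^ 2 * M * mulEnergy A B) := by ring

theorem exists_subset_card_mul_inv_le_of_pow_three_le_mulEnergy (hα : 0 < α) (hn : 0 < n)
    (hnAB : n ^ 2 = #A * #B) (hE : n ^ 3 ≤ α * mulEnergy A B) :
    ∃ A' ⊆ A, (#A : ℝ) ≤ 8 * α * #A' ∧ (#(A' * A'⁻¹) : ℝ) ≤ 2 ^ 22 * α ^ 10 * #A' ∧
      (#A' * #B ^ 2 : ℝ) ≤ 2 ^ 16 * α ^ 7 * mulEnergy A' B := by
  obtain ⟨hApos, hBpos⟩ : 0 < #A ∧ 0 < #B := by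
    have : (0 : ℝ) < (#A * #B : ℕ) := by push_cast; exact hnAB ▸ pow_pos hn 2
    exact CanonicallyOrderedAdd.mul_pos.1 (Nat.cast_pos.1 this)
  set P := popularProducts A B (n / (2 * α))
  have hP : (#P : ℝ) ≤ 2 * α * n := card_popularProducts_le hα hn hnAB
  obtain ⟨A', hA'A, hcard, hedges, hquot⟩ := exists_subset_card_mul_inv_le_of_graph
    (mul_pos two_pos hα) (card_pos.1 hApos) (card_pos.1 hBpos)
    (card_mul_card_le_card_popularProducts_edges hα hn hnAB hE)
  have hcard' : (#A : ℝ) ≤ 8 * α * #A' := hcard.trans_eq (by ring)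
  have hA' : A'.Nonempty := card_pos.1 <| Nat.cast_pos.1 <|
    pos_of_mul_pos_right ((Nat.cast_pos.2 hApos).trans_le hcard') (by positivity)
  refine ⟨A', hA'A, hcard', ?_, ?_⟩
  · have hquotA : (#(A' * A'⁻¹) : ℝ) ≤ 2 ^ 19 * α ^ 9 * #A := by
      refine le_of_mul_le_mul_right ?_ (by positivity : (0 : ℝ) < #A * #B ^ 2)
      calc (#(A' * A'⁻¹) * (#A * #B ^ 2) : ℝ) ≤ 2 ^ 10 * (2 * α) ^ 5 * #P ^ 4 := hquot
        _ ≤ 2 ^ 10 * (2 * α) ^ 5 * (2 * α * n) ^ 4 := by gcongr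
        _ = 2 ^ 19 * α ^ 9 * (n ^ 2) ^ 2 := by ring
        _ = 2 ^ 19 * α ^ 9 * #A * (#A * #B ^ 2) := by rw [hnAB]; ring
    calc (#(A' * A'⁻¹) : ℝ) ≤ 2 ^ 19 * α ^ 9 * #A := hquotA
      _ ≤ 2 ^ 19 * α ^ 9 * (8 * α * #A') := by gcongr
      _ = 2 ^ 22 * α ^ 10 * #A' := by ring
  · have hPA' : (#P : ℝ) ≤ 16 * α ^ 3 * #A' :=
      calc (#P : ℝ) ≤ 2 * α * n := hP
        _ ≤ 2 * α * (α * #A) := by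
          gcongr
          exact le_mul_card_left_of_pow_three_le_mulEnergy hα hn hnAB hE
        _ ≤ 2 * α * (α * (8 * α * #A')) := by gcongr
        _ = 16 * α ^ 3 * #A' := by ring
    exact (card_mul_card_sq_le_mulEnergy hA' hedges hPA').trans_eq (by ring)

end EnergyBalogSzemerediGowers

section ApproximateSubgroup

open Finset

variable {G : Type*} [Group G] [DecidableEq G] {A B S : Finset G}

lemma IsApproxSubgroup.mono {K L : ℝ} (hKL : K ≤ L) (h : IsApproxSubgroup K S) :
    IsApproxSubgroup L S := by
  obtain ⟨hone, hinv, X, hX, hXS, hcard, hcover⟩ := h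
  exact ⟨hone, hinv, X, hX, hXS, hcard.trans hKL, hcover⟩

-- Ruzsa covering gives `F ⊆ S ^ 4` with `S ^ 4 ⊆ F * (S * S)`, and `F ∪ F⁻¹` is symmetric.
lemma isApproxSubgroup_mul_self {K : ℝ} (hone : 1 ∈ S) (hinv : S⁻¹ = S)
    (hcard : #(S ^ 5) ≤ K * #S) : IsApproxSubgroup (2 * K) (S * S) := by
  have hinv2 : (S * S)⁻¹ = S * S := by rw [mul_inv_rev, hinv]
  have hinv4 : (S * S * (S * S))⁻¹ = S * S * (S * S) := by rw [mul_inv_rev, hinv2]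
  have hpow : S ^ 5 = S * S * (S * S) * S := by simp only [pow_succ, pow_zero, one_mul, mul_assoc]
  obtain ⟨F, hF, hFcard, hcover⟩ := ruzsa_covering_mul ⟨1, hone⟩ (hpow ▸ hcard)
  refine ⟨one_mul (1 : G) ▸ mul_mem_mul hone hone, fun g hg ↦ hinv2 ▸ inv_mem_inv hg,
    F ∪ F⁻¹, ?_, union_subset hF ?_, ?_, ?_⟩
  · simp only [mem_union, mem_inv', inv_inv]
    exact fun _ ↦ Or.symm
  · exact hinv4 ▸ inv_subset_inv hF
  · calc (#(F ∪ F⁻¹) : ℝ) ≤ #F + #F⁻¹ := mod_cast card_union_le F F⁻¹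
      _ = 2 * #F := by rw [card_inv]; ring
      _ ≤ 2 * K := by gcongr
  · rw [div_eq_mul_inv, hinv] at hcover
    exact hcover.trans (mul_subset_mul_right subset_union_left)

lemma exists_card_le_mul_card_inter_singleton_mul {c : ℝ} (hA : A.Nonempty)
    (h : (#A * #B : ℝ) ≤ c * #{p ∈ A ×ˢ B | p.1 * p.2 ∈ S}) :
    ∃ x : G, (#B : ℝ) ≤ c * #(B ∩ ({x} * S)) := by
  have hcount : #{p ∈ A ×ˢ B | p.1 * p.2 ∈ S} = ∑ a ∈ A, #{b ∈ B | a * b ∈ S} :=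
    card_filter_product_eq_sum_left (fun a b ↦ a * b ∈ S) A B
  rw [hcount, Nat.cast_sum, mul_sum, ← nsmul_eq_mul, ← sum_const] at h
  obtain ⟨a, -, ha⟩ := exists_le_of_sum_le hA h
  have htranslate : {b ∈ B | a * b ∈ S} = B ∩ ({a⁻¹} * S) := by
    ext b
    rw [mem_filter, mem_inter, singleton_mul, ← inv_smul_mem_iff, inv_inv, smul_eq_mul]
  exact ⟨a⁻¹, htranslate ▸ ha⟩

lemma exists_card_le_mul_card_inter_mul_singleton {c : ℝ} (hB : B.Nonempty)
    (h : (#A * #B : ℝ) ≤ c * #{p ∈ A ×ˢ B | p.1 * p.2 ∈ S}) :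
    ∃ y : G, (#A : ℝ) ≤ c * #(A ∩ (S * {y})) := by
  have hcount : #{p ∈ A ×ˢ B | p.1 * p.2 ∈ S} = ∑ b ∈ B, #{a ∈ A | a * b ∈ S} :=
    card_filter_product_eq_sum_right (fun a b ↦ a * b ∈ S) A B
  rw [hcount, Nat.cast_sum, mul_sum, mul_comm, ← nsmul_eq_mul, ← sum_const] at h
  obtain ⟨b, -, hb⟩ := exists_le_of_sum_le hB h
  have htranslate : {a ∈ A | a * b ∈ S} = A ∩ (S * {b⁻¹}) := by
    ext a
    rw [mem_filter, mem_inter, mul_singleton, MulOpposite.op_inv, ← inv_smul_mem_iff, inv_inv,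
      op_smul_eq_mul]
  exact ⟨b⁻¹, htranslate ▸ hb⟩

end ApproximateSubgroup

section PopularQuotients

open Finset

variable {G : Type*} [Group G] [DecidableEq G] {A B : Finset G} {t : ℝ}

lemma inv_popularProducts_inv_mul_self (A : Finset G) (t : ℝ) :
    (popularProducts A⁻¹ A t)⁻¹ = popularProducts A⁻¹ A t := by
  ext g
  have hg : g⁻¹ ∈ A⁻¹ * A ↔ g ∈ A⁻¹ * A := by rw [← mem_inv', mul_inv_rev, inv_inv]
  simp only [popularProducts, mem_inv', mem_filter, convolution_inv, inv_inv, hg]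

lemma one_mem_popularProducts_inv_mul_self (hA : A.Nonempty) (ht : t ≤ #A) :
    1 ∈ popularProducts A⁻¹ A t := by
  obtain ⟨a, ha⟩ := hA
  refine mem_filter.2 ⟨inv_mul_cancel a ▸ mul_mem_mul (inv_mem_inv ha) ha, ht.trans ?_⟩
  refine Nat.cast_le.2 <| card_le_card_of_injOn (fun a ↦ (a⁻¹, a)) ?_ ?_
  · intro a ha
    simp only [mem_coe, mem_filter, mem_product, inv_mul_cancel, and_true]
    exact ⟨inv_mem_inv ha, ha⟩
  · exact fun a _ b _ h ↦ (Prod.ext_iff.1 h).2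

-- If `s = p * q` is popular, each of its representations gives one of
-- `x * s * y` as `(x * p) * (q * y)`.
lemma card_mul_popularProducts_mul_le (X A B Y : Finset G) (t : ℝ) :
    #(X * popularProducts A B t * Y) * t ≤ #(X * A) * #(B * Y) := by
  rw [← Nat.cast_mul, ← card_product]
  refine card_mul_le_card_of_forall_le_card_fiber _ _ (fun p ↦ p.1 * p.2) fun g hg ↦ ?_
  obtain ⟨w, hw, y, hy, rfl⟩ := mem_mul.1 hg
  obtain ⟨x, hx, s, hs, rfl⟩ := mem_mul.1 hw
  refine (mem_filter.1 hs).2.trans <| Nat.cast_le.2 <|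
    card_le_card_of_injOn (fun p ↦ (x * p.1, p.2 * y)) ?_ fun p _ q _ h ↦ ?_
  · rintro ⟨p, q⟩ hpq
    simp only [mem_coe, mem_filter, mem_product] at hpq ⊢
    exact ⟨⟨mul_mem_mul hx hpq.1.1, mul_mem_mul hpq.1.2 hy⟩, by rw [← hpq.2]; group⟩
  · simp only [Prod.mk.injEq, mul_right_inj, mul_left_inj] at h
    exact Prod.ext h.1 h.2

lemma card_mul_popularProducts_pow_mul_le (ht : 0 ≤ t) (A : Finset G) (k : ℕ) :
    #(A * popularProducts A⁻¹ A t ^ k) * t ^ k ≤ (#(A * A⁻¹) : ℝ) ^ k * #A := by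
  induction k with
  | zero => simp
  | succ k ih =>
    set S := popularProducts A⁻¹ A t
    calc (#(A * S ^ (k + 1)) * t ^ (k + 1) : ℝ) = #(A * S * S ^ k) * t * t ^ k := by
          rw [pow_succ' S, mul_assoc A, pow_succ' t, mul_assoc]
      _ ≤ #(A * A⁻¹) * #(A * S ^ k) * t ^ k := by
        exact mul_le_mul_of_nonneg_right (card_mul_popularProducts_mul_le A A⁻¹ A _ t)
          (by positivity)
      _ = #(A * A⁻¹) * (#(A * S ^ k) * t ^ k) := mul_assoc _ _ _
      _ ≤ #(A * A⁻¹) * (#(A * A⁻¹) ^ k * #A) := by gcongr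
      _ = #(A * A⁻¹) ^ (k + 1) * #A := by ring

lemma card_popularProducts_pow_le {K : ℝ} (hK : 0 < K) (hA : A.Nonempty)
    (hAA : #(A * A⁻¹) ≤ K * #A) (k : ℕ) :
    #(popularProducts A⁻¹ A (#A / (2 * K)) ^ k) ≤ (2 * K ^ 2) ^ k * #A := by
  set t : ℝ := #A / (2 * K) with ht
  have htpos : 0 < t := div_pos (mod_cast hA.card_pos) (by positivity)
  have hKA : K * #A = 2 * K ^ 2 * t := by rw [ht]; field_simp
  refine le_of_mul_le_mul_right ?_ (pow_pos htpos k)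
  calc #(popularProducts A⁻¹ A t ^ k) * t ^ k
      ≤ #(A * popularProducts A⁻¹ A t ^ k) * t ^ k := by
        exact mul_le_mul_of_nonneg_right (mod_cast card_le_card_mul_left hA) (by positivity)
    _ ≤ (#(A * A⁻¹) : ℝ) ^ k * #A := card_mul_popularProducts_pow_mul_le htpos.le A k
    _ ≤ (2 * K ^ 2 * t) ^ k * #A := by
      gcongr
      exact hAA.trans_eq hKA
    _ = (2 * K ^ 2) ^ k * #A * t ^ k := by rw [mul_pow _ t, mul_right_comm]

lemma card_mul_card_le_card_popularProducts_quotients {K : ℝ} (hK : 0 < K) (hA : A.Nonempty)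
    (hE : (#A * #B ^ 2 : ℝ) ≤ K * mulEnergy A B) :
    (#B * #B⁻¹ : ℝ) ≤
      2 * K * #{p ∈ B ×ˢ B⁻¹ | p.1 * p.2 ∈ popularProducts A⁻¹ A (#A / (2 * K))} := by
  rw [← sum_convolution, Nat.cast_sum]
  refine le_sum_popularProducts (fun _ ↦ Nat.cast_nonneg _) (mod_cast hA.card_pos) hK
    (fun _ ↦ mod_cast convolution_le_card_right) (sum_convolution_le _ _ _) ?_
  rw [mulEnergy_eq_sum_convolution_mul_convolution] at hE
  push_cast at hE
  rwa [card_inv, ← sq]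

lemma card_mul_card_le_card_popularProducts_self_quotients {K : ℝ} (hK : 0 < K) (hA : A.Nonempty)
    (hAA : #(A * A⁻¹) ≤ K * #A) :
    (#A⁻¹ * #A : ℝ) ≤
      2 * K * #{p ∈ A⁻¹ ×ˢ A | p.1 * p.2 ∈ popularProducts A⁻¹ A (#A / (2 * K))} := by
  have hApos : (0 : ℝ) < #A := mod_cast hA.card_pos
  have hE : (#A * #A⁻¹ ^ 2 : ℝ) ≤ K * mulEnergy A A⁻¹ := by
    refine le_of_mul_le_mul_left ?_ hApos
    calc (#A * (#A * #A⁻¹ ^ 2) : ℝ) = #A ^ 2 * #A⁻¹ ^ 2 := by ring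
      _ ≤ #(A * A⁻¹) * mulEnergy A A⁻¹ := mod_cast le_card_mul_mul_mulEnergy A A⁻¹
      _ ≤ K * #A * mulEnergy A A⁻¹ := by gcongr
      _ = #A * (K * mulEnergy A A⁻¹) := by ring
  simpa only [inv_inv] using card_mul_card_le_card_popularProducts_quotients hK hA hE

lemma card_le_card_popularProducts_inv_mul_self {K : ℝ} (hK : 0 < K) (hA : A.Nonempty)
    (hAA : #(A * A⁻¹) ≤ K * #A) :
    #A ≤ 2 * K * #(popularProducts A⁻¹ A (#A / (2 * K))) := by
  set S := popularProducts A⁻¹ A (#A / (2 * K))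
  refine le_of_mul_le_mul_right ?_ (mod_cast hA.card_pos : (0 : ℝ) < #A)
  calc (#A * #A : ℝ) ≤ 2 * K * ∑ g ∈ S, (A⁻¹.convolution A g : ℝ) := by
        simpa only [card_inv, ← sum_convolution, Nat.cast_sum] using
          card_mul_card_le_card_popularProducts_self_quotients hK hA hAA
    _ ≤ 2 * K * ∑ _ ∈ S, (#A : ℝ) := by
      gcongr
      exact convolution_le_card_right
    _ = 2 * K * #S * #A := by rw [sum_const, nsmul_eq_mul, ← mul_assoc]

end PopularQuotients

section LargeEnergy

open Finset

variable {G : Type*} [Group G] [DecidableEq G] {A B : Finset G}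

theorem exists_isApproxSubgroup_of_card_mul_inv_le {K : ℝ} (hA : A.Nonempty) (hB : B.Nonempty)
    (hAA : #(A * A⁻¹) ≤ K * #A) (hE : (#A * #B ^ 2 : ℝ) ≤ K * mulEnergy A B) :
    ∃ (H : Finset G) (x y : G), IsApproxSubgroup (2 ^ 7 * K ^ 11) H ∧
      (#H : ℝ) ≤ 4 * K ^ 4 * #A ∧
      (#A : ℝ) ≤ 2 * K * #(A ∩ ({x} * H)) ∧
      (#B : ℝ) ≤ 2 * K * #(B ∩ (H * {y})) ∧
      (#(H * H * H) : ℝ) ≤ 2 ^ 7 * K ^ 13 * #H := by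
  have hApos : (0 : ℝ) < #A := mod_cast hA.card_pos
  have hK : 1 ≤ K := by
    refine le_of_mul_le_mul_right (le_trans ?_ hAA) hApos
    rw [one_mul]
    exact_mod_cast card_le_card_mul_right hA.inv
  have hKpos : 0 < K := one_pos.trans_le hK
  set S := popularProducts A⁻¹ A (#A / (2 * K))
  have hone : 1 ∈ S :=
    one_mem_popularProducts_inv_mul_self hA (div_le_self hApos.le (by linarith))
  have hinv : S⁻¹ = S := inv_popularProducts_inv_mul_self A _
  have hpow (k : ℕ) : (#(S ^ k) : ℝ) ≤ (2 * K ^ 2) ^ k * #A :=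
    card_popularProducts_pow_le hKpos hA hAA k
  have hpow' (k : ℕ) : (#(S ^ k) : ℝ) ≤ (2 * K ^ 2) ^ k * (2 * K * #S) :=
    (hpow k).trans (by gcongr; exact card_le_card_popularProducts_inv_mul_self hKpos hA hAA)
  have hSS : S ⊆ S * S := subset_mul_left S hone
  obtain ⟨x, hx⟩ := exists_card_le_mul_card_inter_singleton_mul hA.inv
    (card_mul_card_le_card_popularProducts_self_quotients hKpos hA hAA)
  obtain ⟨y, hy⟩ := exists_card_le_mul_card_inter_mul_singleton hB.inv
    (card_mul_card_le_card_popularProducts_quotients hKpos hA hE)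
  refine ⟨S * S, x, y, ?_, ?_, hx.trans ?_, hy.trans ?_, ?_⟩
  · have := isApproxSubgroup_mul_self hone hinv ((hpow' 5).trans_eq (by ring :
      _ = 2 ^ 6 * K ^ 11 * (#S : ℝ)))
    exact this.mono (by linarith)
  · rw [← sq S]
    exact (hpow 2).trans_eq (by ring)
  · gcongr
  · gcongr
  · calc (#(S * S * (S * S) * (S * S)) : ℝ) = #(S ^ 6) := by
          simp only [pow_succ, pow_zero, one_mul, mul_assoc]
      _ ≤ (2 * K ^ 2) ^ 6 * (2 * K * #S) := hpow' 6
      _ = 2 ^ 7 * K ^ 13 * #S := by ring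
      _ ≤ 2 ^ 7 * K ^ 13 * #(S * S) := by gcongr

lemma two_pow_mul_pow_le {α : ℝ} (hα : 1 ≤ α) {i j k l : ℕ} (hik : i ≤ k) (hjl : j ≤ l) :
    (2 : ℝ) ^ i * α ^ j ≤ 2 ^ k * α ^ l := by
  have := one_le_two (α := ℝ)
  gcongr

theorem exists_isApproxSubgroup_of_pow_three_le_mulEnergy {α n : ℝ} (hα : 1 ≤ α) (hn : 0 < n)
    (hnAB : n ^ 2 = #A * #B) (hE : n ^ 3 ≤ α * mulEnergy A B) :
    ∃ (H : Finset G) (x y : G), IsApproxSubgroup (2 ^ 249 * α ^ 110) H ∧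
      (#H : ℝ) ≤ 2 ^ 90 * α ^ 40 * #A ∧
      (#A : ℝ) ≤ 2 ^ 26 * α ^ 11 * #(A ∩ ({x} * H)) ∧
      (#B : ℝ) ≤ 2 ^ 23 * α ^ 10 * #(B ∩ (H * {y})) ∧
      (#(H * H * H) : ℝ) ≤ 2 ^ 293 * α ^ 130 * #H := by
  have hαpos : 0 < α := one_pos.trans_le hα
  obtain ⟨A', hA'A, hcard, hquot, henergy⟩ :=
    exists_subset_card_mul_inv_le_of_pow_three_le_mulEnergy hαpos hn hnAB hE
  have hABpos : (0 : ℝ) < #A * #B := hnAB ▸ pow_pos hn 2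
  have hA' : A'.Nonempty := by
    rw [← card_pos, ← Nat.cast_pos (α := ℝ)]
    exact pos_of_mul_pos_right ((pos_of_mul_pos_left hABpos (by positivity)).trans_le hcard)
      (by positivity)
  have hB : B.Nonempty := by
    rw [← card_pos, ← Nat.cast_pos (α := ℝ)]
    exact pos_of_mul_pos_right hABpos (by positivity)
  obtain ⟨H, x, y, happrox, hH, hx, hy, hHHH⟩ :=
    exists_isApproxSubgroup_of_card_mul_inv_le hA' hB hquot <| henergy.trans <| by
      gcongr ?_ * _
      exact two_pow_mul_pow_le hα (by norm_num) (by norm_num)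
  have hconst (k : ℕ) : 2 ^ 7 * (2 ^ 22 * α ^ 10) ^ k = 2 ^ (22 * k + 7) * α ^ (10 * k) := by
    rw [mul_pow, ← pow_mul, ← pow_mul, ← mul_assoc, ← pow_add, add_comm]
  refine ⟨H, x, y, happrox.mono (hconst 11).le, ?_, ?_, hy.trans_eq (by ring),
    hHHH.trans_eq (congrArg (· * (#H : ℝ)) (hconst 13))⟩
  · calc (#H : ℝ) ≤ 4 * (2 ^ 22 * α ^ 10) ^ 4 * #A' := hH
      _ ≤ 4 * (2 ^ 22 * α ^ 10) ^ 4 * #A := by gcongr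
      _ = 2 ^ 90 * α ^ 40 * #A := by ring
  · calc (#A : ℝ) ≤ 8 * α * #A' := hcard
      _ ≤ 8 * α * (2 * (2 ^ 22 * α ^ 10) * #(A ∩ ({x} * H))) := by
        gcongr
        exact hx.trans (by gcongr)
      _ = 2 ^ 26 * α ^ 11 * #(A ∩ ({x} * H)) := by ring

lemma zpow_neg_mul_zpow_neg_mul_le {a b X Y : ℝ} {k l : ℕ} (ha : 0 < a) (hb : 0 < b)
    (h : X ≤ a ^ k * b ^ l * Y) : a ^ (-k : ℤ) * b ^ (-l : ℤ) * X ≤ Y := by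
  rw [zpow_neg, zpow_neg, zpow_natCast, zpow_natCast, ← mul_inv, inv_mul_le_iff₀ (by positivity)]
  exact h

end LargeEnergy

theorem stmt_5_general {G : Type*} [Group G] [DecidableEq G]
    (α : ℝ) (hα : 1 ≤ α) (A B : Finset G) (hA : A.Nonempty) (hB : B.Nonempty)
    (hE : α⁻¹ * ((A.card : ℝ) * B.card) ^ ((3 : ℝ) / 2) ≤ (mulE A B : ℝ)) :
    (A.card : ℝ) ≤ α ^ 2 * B.card ∧
    ∃ (H : Finset G) (x y : G),
      IsApproxSubgroup (2 ^ 1861 * α ^ 720) H ∧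
      (H.card : ℝ) ≤ 2 ^ 325 * α ^ 126 * A.card ∧
      (2 : ℝ) ^ (-2424 : ℤ) * α ^ (-937 : ℤ) * A.card ≤ ((A ∩ ({x} * H)).card : ℝ) ∧
      (2 : ℝ) ^ (-2424 : ℤ) * α ^ (-937 : ℤ) * B.card ≤ ((B ∩ (H * {y})).card : ℝ) ∧
      ((H * H * H).card : ℝ) ≤ 2 ^ 930 * α ^ 360 * H.card := by
  have hαpos : 0 < α := one_pos.trans_le hα
  have hABpos : (0 : ℝ) < A.card * B.card := mod_cast Nat.mul_pos hA.card_pos hB.card_pos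
  set n : ℝ := √(A.card * B.card)
  have hn : 0 < n := Real.sqrt_pos.2 hABpos
  have hnAB : n ^ 2 = A.card * B.card := Real.sq_sqrt hABpos.le
  have hE' : n ^ 3 ≤ α * A.mulEnergy B := by
    rw [Real.rpow_div_two_eq_sqrt _ hABpos.le, inv_mul_le_iff₀ hαpos, Real.rpow_ofNat] at hE
    exact hE
  obtain ⟨H, x, y, happrox, hH, hx, hy, hHHH⟩ :=
    exists_isApproxSubgroup_of_pow_three_le_mulEnergy hα hn hnAB hE'
  have weaken {i j k l : ℕ} {X : ℝ} {S : Finset G} (h : X ≤ 2 ^ i * α ^ j * S.card)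
      (hik : i ≤ k) (hjl : j ≤ l) : X ≤ 2 ^ k * α ^ l * S.card :=
    h.trans (mul_le_mul_of_nonneg_right (two_pow_mul_pow_le hα hik hjl) (Nat.cast_nonneg _))
  exact ⟨card_le_sq_mul_card_of_pow_three_le_mulEnergy hαpos hn hnAB hE', H, x, y,
    happrox.mono (two_pow_mul_pow_le hα (by lia) (by lia)), weaken hH (by lia) (by lia),
    zpow_neg_mul_zpow_neg_mul_le two_pos hαpos (weaken hx (by lia) (by lia)),
    zpow_neg_mul_zpow_neg_mul_le two_pos hαpos (weaken hy (by lia) (by lia)),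
    weaken hHHH (by lia) (by lia)⟩

/-- **Explicit multiplicative combinatorics (Theorem `th-large-energy`, after Tao).**
If `A`, `B` are nonempty subsets of a finite group with normalized multiplicative energy
at least `α⁻¹`, then `|A| ≤ α²|B|`, and there are a `(2^1861·α^720)`-approximate subgroup `H`
and `x, y ∈ G` with `|H| ≤ 2^325·α^126·|A|`, `|A ∩ xH| ≥ 2^(-2424)·α^(-937)·|A|`,
`|B ∩ Hy| ≥ 2^(-2424)·α^(-937)·|B|` and `|H·H·H| ≤ 2^930·α^360·|H|`. -/
theorem stmt_5 {G : Type*} [Group G] [Fintype G] [DecidableEq G]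
    (α : ℝ) (hα : 1 ≤ α) (A B : Finset G) (hA : A.Nonempty) (hB : B.Nonempty)
    (hE : α⁻¹ * ((A.card : ℝ) * B.card) ^ ((3 : ℝ) / 2) ≤ (mulE A B : ℝ)) :
    (A.card : ℝ) ≤ α ^ 2 * B.card ∧
    ∃ (H : Finset G) (x y : G),
      IsApproxSubgroup (2 ^ 1861 * α ^ 720) H ∧
      (H.card : ℝ) ≤ 2 ^ 325 * α ^ 126 * A.card ∧
      (2 : ℝ) ^ (-2424 : ℤ) * α ^ (-937 : ℤ) * A.card ≤ ((A ∩ ({x} * H)).card : ℝ) ∧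
      (2 : ℝ) ^ (-2424 : ℤ) * α ^ (-937 : ℤ) * B.card ≤ ((B ∩ (H * {y})).card : ℝ) ∧
      ((H * H * H).card : ℝ) ≤ 2 ^ 930 * α ^ 360 * H.card := by
  exact stmt_5_general α hα A B hA hB hE
end

section
/- Let G be a finite group and let H be a nonempty symmetric subset of G. Then for every n ≥ 3, |H^(n)| · |H|^(n−3) ≤ |H^(3)|^(n−2). -/
open Pointwise

/-!
For symmetric `H`, Ruzsa's triangle inequality `|AC| |B| ≤ |AB| |C⁻¹B|` applied to powers of `H`
says that `|H^(k+m)| |H^l| ≤ |H^(k+l)| |H^(m+l)|`. Taking `l = 1` and `m = 2`, each further factor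
of `H` multiplies the size of the product set by at most `|H^3| / |H|`.
-/

section SymmetricPowers

open Finset

variable {G : Type*} [Group G] [DecidableEq G] {H : Finset G}

theorem inv_eq_self_of_forall_inv_mem (hsym : ∀ h ∈ H, h⁻¹ ∈ H) : H⁻¹ = H := by
  ext x
  rw [mem_inv']
  exact ⟨fun hx => inv_inv x ▸ hsym x⁻¹ hx, hsym x⟩

theorem card_pow_add_mul_card_pow_le (hH : H⁻¹ = H) (k l m : ℕ) :
    #(H ^ (k + m)) * #(H ^ l) ≤ #(H ^ (k + l)) * #(H ^ (m + l)) := by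
  simpa only [pow_add, ← inv_pow, hH] using
    ruzsa_triangle_inequality_mul_mul_invMul (H ^ k) (H ^ l) (H ^ m)

theorem stmt_6_general (hH : H⁻¹ = H) {n : ℕ} (hn : 3 ≤ n) :
    #(H ^ n) * #H ^ (n - 3) ≤ #(H ^ 3) ^ (n - 2) := by
  obtain ⟨k, rfl⟩ := Nat.exists_eq_add_of_le' hn
  change #(H ^ (k + 3)) * #H ^ k ≤ #(H ^ 3) ^ (k + 1)
  induction k with
  | zero => simp
  | succ k ih =>
    have growth : #(H ^ (k + 4)) * #H ≤ #(H ^ (k + 3)) * #(H ^ 3) := by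
      simpa only [pow_one] using card_pow_add_mul_card_pow_le hH (k + 2) 1 2
    calc #(H ^ (k + 4)) * #H ^ (k + 1)
        = #(H ^ (k + 4)) * #H * #H ^ k := by ring
      _ ≤ #(H ^ (k + 3)) * #(H ^ 3) * #H ^ k := by gcongr
      _ = #(H ^ (k + 3)) * #H ^ k * #(H ^ 3) := by ring
      _ ≤ #(H ^ 3) ^ (k + 1) * #(H ^ 3) := by gcongr; exact ih (Nat.le_add_left 3 k)
      _ = #(H ^ 3) ^ (k + 2) := (pow_succ _ _).symm

end SymmetricPowers

/-- **Ruzsa's inequality (Proposition 1(1)).** For a nonempty symmetric subset `H` of a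
finite group `G` and `n ≥ 3`, one has `|H^(n)| · |H|^(n-3) ≤ |H^(3)|^(n-2)`,
i.e. `α_n ≤ α_3^(n-2)` where `α_n = |H^(n)|/|H|`. -/
theorem stmt_6 {G : Type*} [Group G] [Fintype G] [DecidableEq G]
    (H : Finset G) (hne : H.Nonempty) (hsym : ∀ h ∈ H, h⁻¹ ∈ H)
    (n : ℕ) (hn : 3 ≤ n) :
    (H ^ n : Finset G).card * H.card ^ (n - 3) ≤ (H ^ 3 : Finset G).card ^ (n - 2) :=
  stmt_6_general (inv_eq_self_of_forall_inv_mem hsym) hn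
end

section
/- Let G be a finite group and let H be a nonempty symmetric subset of G. Then |H^(6)| · |H|^4 ≤ |H^(3)|^4 · |H^(2)|, and for every k ≥ 3, |H^(3k)| · |H|^(3k−3) ≤ |H^(3)|^(3k−3) · |H^(k)|. (Equivalently, the tripling constant of H^(2) is at most that of H raised to the 4th power, and the tripling constant of H^(k) is at most that of H raised to the power 3k−3 for k ≥ 3.) -/
open Pointwise

/-! Ruzsa's triangle inequality gives `|H| * |H² * C| ≤ |H³| * |H * C|` for symmetric `H` and
arbitrary `C`: each further factor `H` costs at most the tripling constant of `H`. Passing from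
`H ^ k` to `H ^ (3 * k)` takes `2 * k` further factors, so the tripling constant of `H ^ k` is at
most that of `H` to the power `2 * k`; this exponent is `4` for `k = 2` and at most `3 * k - 3` for
`k ≥ 3`. -/

section Tripling

open scoped Finset

variable {G : Type*} [Group G] [DecidableEq G] {A : Finset G}

theorem card_mul_card_sq_mul_le (hA : A⁻¹ = A) (C : Finset G) :
    #A * #(A ^ 2 * C) ≤ #(A ^ 3) * #(A * C) := by
  have h := Finset.ruzsa_triangle_inequality_mul_mulInv_mul (A ^ 2) A C
  rwa [← inv_pow, hA, ← pow_succ'] at h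

theorem card_pow_succ_mul_mul_card_pow_le (hA : A⁻¹ = A) (n : ℕ) (C : Finset G) :
    #(A ^ (n + 1) * C) * #A ^ n ≤ #(A ^ 3) ^ n * #(A * C) := by
  induction n generalizing C with
  | zero => simp
  | succ n ih =>
    calc #(A ^ (n + 1 + 1) * C) * #A ^ (n + 1)
        = #(A ^ (n + 1) * (A * C)) * #A ^ n * #A := by
          rw [pow_succ A (n + 1), mul_assoc, pow_succ #A, mul_assoc]
      _ ≤ #(A ^ 3) ^ n * #(A * (A * C)) * #A := Nat.mul_le_mul_right _ (ih (A * C))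
      _ = #(A ^ 3) ^ n * (#A * #(A ^ 2 * C)) := by rw [sq, mul_assoc A]; ring
      _ ≤ #(A ^ 3) ^ n * (#(A ^ 3) * #(A * C)) :=
          Nat.mul_le_mul_left _ (card_mul_card_sq_mul_le hA C)
      _ = #(A ^ 3) ^ (n + 1) * #(A * C) := by ring

theorem card_pow_three_mul_mul_card_pow_le (hA : A⁻¹ = A) (k : ℕ) :
    #(A ^ (3 * k)) * #A ^ (2 * k) ≤ #(A ^ 3) ^ (2 * k) * #(A ^ k) := by
  cases k with
  | zero => simp
  | succ j =>
    have h := card_pow_succ_mul_mul_card_pow_le hA (2 * (j + 1)) (A ^ j)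
    rwa [← pow_add, ← pow_succ', show 2 * (j + 1) + 1 + j = 3 * (j + 1) by ring] at h

theorem stmt_7_general (H : Finset G) (hsym : ∀ h ∈ H, h⁻¹ ∈ H) (k : ℕ) {n : ℕ}
    (hkn : 2 * k ≤ n) :
    #(H ^ (3 * k)) * #H ^ n ≤ #(H ^ 3) ^ n * #(H ^ k) := by
  have hinv : H⁻¹ = H :=
    Finset.eq_of_subset_of_card_le (Finset.image_subset_iff.2 hsym) (Finset.card_inv H).ge
  have hcard : #H ≤ #(H ^ 3) := Finset.card_le_card_pow three_ne_zero
  obtain ⟨d, rfl⟩ := Nat.exists_eq_add_of_le hkn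
  calc #(H ^ (3 * k)) * #H ^ (2 * k + d)
      = #(H ^ (3 * k)) * #H ^ (2 * k) * #H ^ d := by ring
    _ ≤ #(H ^ 3) ^ (2 * k) * #(H ^ k) * #(H ^ 3) ^ d :=
        Nat.mul_le_mul (card_pow_three_mul_mul_card_pow_le hinv k) (Nat.pow_le_pow_left hcard d)
    _ = #(H ^ 3) ^ (2 * k + d) * #(H ^ k) := by ring

end Tripling

/-- **Ruzsa's inequality for tripling constants of powers (Proposition 1(2)).**
For a nonempty symmetric subset `H` of a finite group:
`|H^(6)|·|H|^4 ≤ |H^(3)|^4·|H^(2)|` (i.e. `trp(H^(2)) ≤ trp(H)^4`) and, for `k ≥ 3`,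
`|H^(3k)|·|H|^(3k-3) ≤ |H^(3)|^(3k-3)·|H^(k)|` (i.e. `trp(H^(k)) ≤ trp(H)^(3k-3)`). -/
theorem stmt_7 {G : Type*} [Group G] [Fintype G] [DecidableEq G]
    (H : Finset G) (hne : H.Nonempty) (hsym : ∀ h ∈ H, h⁻¹ ∈ H) :
    (H ^ 6 : Finset G).card * H.card ^ 4 ≤ (H ^ 3 : Finset G).card ^ 4 * (H ^ 2 : Finset G).card ∧
    ∀ k : ℕ, 3 ≤ k →
      (H ^ (3 * k) : Finset G).card * H.card ^ (3 * k - 3) ≤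
        (H ^ 3 : Finset G).card ^ (3 * k - 3) * (H ^ k : Finset G).card := by
  exact ⟨stmt_7_general H hsym 2 le_rfl, fun k hk => stmt_7_general H hsym k (by lia)⟩
end

section
/- Let G be a finite group and let H be a symmetric generating set of G containing the identity. If H^(3) ≠ G, then |H^(3)|² ≥ 2·|H|² (i.e. |H^(3)| ≥ √2·|H|). -/
open Pointwise

/-!
By Freiman's theorem on sets of doubling less than `3 / 2`, if `|A²| < 3/2 |A|` then `A⁻¹A` is a
subgroup and `A² = a(A⁻¹A)a` for every `a ∈ A`. When `1 ∈ A`, taking `a = 1` shows that `A²` is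
itself a subgroup, hence the one generated by `A`. So unless `H² = ⟨H⟩`, already
`|H²| ≥ 3/2 |H|`, and `(3/2)² > 2`.
-/

theorem coe_sq_eq_closure_of_doubling_lt_three_halves {G : Type*} [Group G] [DecidableEq G]
    {A : Finset G} (hone : (1 : G) ∈ A) (hA : ((A * A).card : ℚ) < 3 / 2 * A.card) :
    ((A ^ 2 : Finset G) : Set G) = Subgroup.closure (A : Set G) := by
  have hsq : A⁻¹ * A = A ^ 2 := by
    simpa [sq] using Finset.smul_inv_mul_opSMul_eq_mul_of_doubling_lt_three_halves hA hone
  have hcoe : (Finset.invMulSubgroup A hA : Set G) = ((A ^ 2 : Finset G) : Set G) := by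
    rw [Finset.invMulSubgroup_eq_inv_mul, ← hsq, Finset.coe_mul, Finset.coe_inv]
  rw [← Subgroup.closure_pow (Finset.mem_coe.2 hone) two_ne_zero, ← Finset.coe_pow, ← hcoe,
    Subgroup.closure_eq]

theorem stmt_8_general {G : Type*} [Group G] [DecidableEq G] (H : Finset G) (hone : (1 : G) ∈ H)
    (hne : ((H ^ 2 : Finset G) : Set G) ≠ Subgroup.closure (H : Set G)) :
    3 * H.card ≤ 2 * (H ^ 2 : Finset G).card := by
  contrapose! hne
  refine coe_sq_eq_closure_of_doubling_lt_three_halves hone ?_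
  rw [← sq]
  qify at hne
  linarith

/-- **Growth for small sets (Lemma `lm-small-p`).** If `H` is a symmetric generating set of a
finite group `G` containing the identity and `H^(3) ≠ G`, then `|H^(3)|² ≥ 2·|H|²`,
i.e. `|H^(3)| ≥ √2·|H|`. -/
theorem stmt_8 {G : Type*} [Group G] [Fintype G] [DecidableEq G]
    (H : Finset G) (hsym : ∀ h ∈ H, h⁻¹ ∈ H) (hone : (1 : G) ∈ H)
    (hgen : Subgroup.closure (H : Set G) = ⊤)
    (hne : (H ^ 3 : Finset G) ≠ Finset.univ) :
    2 * H.card ^ 2 ≤ (H ^ 3 : Finset G).card ^ 2 := by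
  have hsub : H ^ 2 ⊆ H ^ 3 := Finset.pow_subset_pow_right hone (by norm_num)
  have hsq : H ^ 2 ≠ Finset.univ := fun h ↦ hne (Finset.univ_subset_iff.1 (h ▸ hsub))
  have hgrowth := stmt_8_general H hone (by rwa [hgen, Subgroup.coe_top, Ne, Finset.coe_eq_univ])
  have hcard := Finset.card_le_card hsub
  nlinarith
end

section
/- Let G be a finite group acting on a nonempty finite set X, let x ∈ X, and let K = {g ∈ G : g·x = x} be the stabilizer of x. Then for any nonempty symmetric subset H ⊆ G, |K ∩ H^(2)| · |H·x| ≥ |H|, where H·x = {h·x : h ∈ H}. -/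
open Pointwise

/-!
The elements of `A` sending `x` to a given point `a • x`, with `a ∈ A`, lie in the coset `aK` of the
stabilizer `K` of `x`. Left translation by `a⁻¹` carries them injectively into `K ∩ A⁻¹A`, so every
fiber of the orbit map `A → A • x` has at most `|K ∩ A⁻¹A|` elements. When `A` is symmetric,
`A⁻¹A` is `A²`.
-/

section OrbitStabilizer

variable {G X : Type*} [Group G] [DecidableEq G] [MulAction G X] [DecidableEq X]

theorem inv_smul_filter_smul_eq_subset (x : X) {A : Finset G} {a : G} (ha : a ∈ A) :
    a⁻¹ • A.filter (fun h => h • x = a • x) ⊆ (A⁻¹ * A).filter fun g => g • x = x := by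
  intro g hg
  obtain ⟨h, hh, rfl⟩ := Finset.mem_smul_finset.mp hg
  obtain ⟨hA, hx⟩ := Finset.mem_filter.mp hh
  have hmem : a⁻¹ * h ∈ A⁻¹ * A := Finset.mul_mem_mul (Finset.inv_mem_inv ha) hA
  have hfix : (a⁻¹ * h) • x = x := by rw [mul_smul, hx, inv_smul_smul]
  exact Finset.mem_filter.mpr ⟨hmem, hfix⟩

theorem card_filter_smul_eq_le (x : X) {A : Finset G} {a : G} (ha : a ∈ A) :
    (A.filter fun h => h • x = a • x).card ≤ ((A⁻¹ * A).filter fun g => g • x = x).card :=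
  calc (A.filter fun h => h • x = a • x).card
      = (a⁻¹ • A.filter fun h => h • x = a • x).card := (Finset.card_smul_finset _ _).symm
    _ ≤ ((A⁻¹ * A).filter fun g => g • x = x).card :=
        Finset.card_le_card (inv_smul_filter_smul_eq_subset x ha)

theorem stmt_9_general (x : X) (A : Finset G) :
    A.card ≤ ((A⁻¹ * A).filter fun g => g • x = x).card * (A.image fun h => h • x).card :=
  Finset.card_le_mul_card_image A _ <| Finset.forall_mem_image.mpr fun _ ha =>
    card_filter_smul_eq_le x ha

end OrbitStabilizer

/-- **Helfgott's orbit–stabilizer inequality.** If a finite group `G` acts on a nonempty finite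
set `X`, `x ∈ X`, `K` is the stabilizer of `x`, and `H ⊆ G` is a nonempty symmetric subset,
then `|K ∩ H^(2)| · |H·x| ≥ |H|`. -/
theorem stmt_9 {G X : Type*} [Group G] [Fintype G] [DecidableEq G]
    [Fintype X] [Nonempty X] [DecidableEq X] [MulAction G X]
    (x : X) (H : Finset G) (hne : H.Nonempty) (hsym : ∀ h ∈ H, h⁻¹ ∈ H) :
    H.card ≤ ((H ^ 2 : Finset G).filter fun g => g • x = x).card *
      (H.image fun h => h • x).card := by
  have hinv : H⁻¹ = H := Finset.ext fun g =>
    Finset.mem_inv'.trans ⟨fun hg => inv_inv g ▸ hsym _ hg, hsym g⟩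
  simpa only [hinv, ← sq] using stmt_9_general x H
end

section
/- Let G be a finite group, K a subgroup of G, and H a nonempty symmetric subset of G. Then for every n ≥ 1, |H^(n+1)| · |H^(2) ∩ K| ≥ |H| · |H^(n) ∩ K|. -/
open Pointwise

/-!
Fix `x` in `A * B` and one representation `x = a₀ * b₀`. Any other representation `x = a * b` is
determined by `a₀⁻¹ * a = b₀ * b⁻¹`, an element of `A⁻¹ * A ∩ B * B⁻¹`. Hence the multiplication map
`A × B → A * B` has fibres of size at most `#(A⁻¹ * A ∩ B * B⁻¹)`. Take `A = H` and `B = H ^ n ∩ K`: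
then `A⁻¹ * A = H ^ 2` by symmetry, and `B * B⁻¹` is contained in the subgroup `K`.
-/

open scoped Finset

section

variable {G : Type*} [Group G] [DecidableEq G]

theorem convolution_le_card_inv_mul_inter_mul_inv (A B : Finset G) (x : G) :
    A.convolution B x ≤ #(A⁻¹ * A ∩ (B * B⁻¹)) := by
  obtain ⟨z, hz⟩ :=
    Set.exists_smul_inter_smul_subset_smul_inv_mul_inter_inv_mul (A : Set G) (B⁻¹ : Set G) 1 x
  have translate_subset : A ∩ x • B⁻¹ ⊆ z • (A⁻¹ * A ∩ (B * B⁻¹)) := by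
    rw [one_smul, inv_inv] at hz
    exact mod_cast hz
  calc A.convolution B x = #(A ∩ x • B⁻¹) := (A.card_inter_smul_inv B x).symm
    _ ≤ #(z • (A⁻¹ * A ∩ (B * B⁻¹))) := Finset.card_le_card translate_subset
    _ = #(A⁻¹ * A ∩ (B * B⁻¹)) := Finset.card_smul_finset _ _

theorem card_mul_card_le_card_mul_mul_card_inter (A B : Finset G) :
    #A * #B ≤ #(A * B) * #(A⁻¹ * A ∩ (B * B⁻¹)) := by
  rw [← Finset.card_product, mul_comm #(A * B)]
  have mapsTo_mul : ∀ p ∈ A ×ˢ B, p.1 * p.2 ∈ A * B := fun p hp ↦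
    Finset.mul_mem_mul (Finset.mem_product.mp hp).1 (Finset.mem_product.mp hp).2
  exact Finset.card_le_mul_card_image_of_maps_to mapsTo_mul _
    fun x _ ↦ convolution_le_card_inv_mul_inter_mul_inv A B x

theorem card_mul_ncard_inter_subgroup_le (A B : Finset G) (K : Subgroup G) :
    #A * (↑B ∩ (K : Set G)).ncard ≤ #(A * B) * (↑(A⁻¹ * A) ∩ (K : Set G)).ncard := by
  classical
  let C : Finset G := {b ∈ B | b ∈ K}
  have coe_C : (C : Set G) = ↑B ∩ (K : Set G) := Finset.coe_filter _ _
  have C_subset_B : C ⊆ B := Finset.filter_subset _ _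
  have mul_inv_subset : (↑(C * C⁻¹) : Set G) ⊆ K := by
    have C_subset_K : (C : Set G) ⊆ K := coe_C ▸ Set.inter_subset_right
    calc (↑(C * C⁻¹) : Set G) = C * (C : Set G)⁻¹ := by rw [Finset.coe_mul, Finset.coe_inv]
      _ ⊆ K * (K : Set G)⁻¹ := Set.mul_subset_mul C_subset_K (Set.inv_subset_inv.mpr C_subset_K)
      _ = K := by rw [inv_coe_set, coe_mul_coe]
  calc #A * (↑B ∩ (K : Set G)).ncard = #A * #C := by rw [← coe_C, Set.ncard_coe_finset]
    _ ≤ #(A * C) * #(A⁻¹ * A ∩ (C * C⁻¹)) := card_mul_card_le_card_mul_mul_card_inter A C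
    _ ≤ #(A * B) * (↑(A⁻¹ * A) ∩ (K : Set G)).ncard := by
      rw [← Set.ncard_coe_finset (A⁻¹ * A ∩ (C * C⁻¹)), Finset.coe_inter]
      gcongr
      exact (Finset.finite_toSet _).inter_of_left _

theorem stmt_10_general (K : Subgroup G) (H : Finset G) (hsym : ∀ h ∈ H, h⁻¹ ∈ H) (n : ℕ) :
    #H * (↑(H ^ n) ∩ (K : Set G)).ncard ≤ #(H ^ (n + 1)) * (↑(H ^ 2) ∩ (K : Set G)).ncard := by
  have inv_subset : H⁻¹ ⊆ H := Finset.image_subset_iff.mpr hsym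
  calc #H * (↑(H ^ n) ∩ (K : Set G)).ncard
      ≤ #(H * H ^ n) * (↑(H⁻¹ * H) ∩ (K : Set G)).ncard :=
        card_mul_ncard_inter_subgroup_le H (H ^ n) K
    _ ≤ #(H ^ (n + 1)) * (↑(H ^ 2) ∩ (K : Set G)).ncard := by
      rw [pow_succ', sq]
      gcongr
      exact (Finset.finite_toSet _).inter_of_left _

end

/-- **Intersection with subgroups (Lemma `lm-intersection`).** For a finite group `G`,
a subgroup `K ⊆ G` and a nonempty symmetric subset `H ⊆ G`, for every `n ≥ 1` one has
`|H^(n+1)| · |H^(2) ∩ K| ≥ |H| · |H^(n) ∩ K|`. -/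
theorem stmt_10 {G : Type*} [Group G] [Fintype G] [DecidableEq G]
    (K : Subgroup G) (H : Finset G) (hne : H.Nonempty) (hsym : ∀ h ∈ H, h⁻¹ ∈ H)
    (n : ℕ) (hn : 1 ≤ n) :
    H.card * ((↑(H ^ n : Finset G) ∩ (K : Set G)).ncard) ≤
      (H ^ (n + 1) : Finset G).card * ((↑(H ^ 2 : Finset G) ∩ (K : Set G)).ncard) :=
  stmt_10_general K H hsym n
end

section
/- Let p ≥ 3 be a prime and let H be a subset of SL₂(𝔽_p) with |H|⁹ ≥ 2⁹ · |SL₂(𝔽_p)|⁸ (i.e. |H| ≥ 2·|SL₂(𝔽_p)|^(8/9)). Then H^(3) = SL₂(𝔽_p). -/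
open Pointwise

instance {n : Type*} [DecidableEq n] [Fintype n] {R : Type*} [CommRing R] [DecidableEq R] :
    DecidableEq (Matrix.SpecialLinearGroup n R) := Subtype.instDecidableEq

/-!
Gowers' argument. Convolution `T` by the balanced indicator function of `A` commutes with right
translations and vanishes on constants, so every nonzero eigenvalue of `T† T` has an eigenspace that
is a nontrivial representation. If those have dimension at least `d`, each such eigenvalue occurs
`d` times in the trace `‖T‖²_HS ≤ |G| |A|`, whence `‖T‖² ≤ |G| |A| / d`. Applied to the indicator
function of `B`, whose image under `T` equals `-|A| |B| / |G|` off `A * B`, this bounds the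
complement of `A * B`, and a set `C` larger than that complement has `A * B * C = G`.

For `SL₂(𝔽_q)`, a nontrivial representation restricts nontrivially to the unipotent subgroup `𝔽_q`,
since transvections generate. Hence it has a nontrivial unipotent weight `ψ`, and the diagonal torus
turns it into the weights `t ↦ ψ (a² t)`, which are distinct for the distinct nonzero squares `a²`.
So `d = ⌊q / 2⌋` is admissible, and `8 d > q` together with `|SL₂(𝔽_q)| ≤ q³` gives the constant
`2⁹`.
-/

section Spectral

open Module Module.End

variable {𝕜 E F : Type*} [RCLike 𝕜]
  [NormedAddCommGroup E] [InnerProductSpace 𝕜 E] [FiniteDimensional 𝕜 E]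
  [NormedAddCommGroup F] [InnerProductSpace 𝕜 F] [FiniteDimensional 𝕜 F]

theorem re_trace_adjoint_comp_self {ι : Type*} [Fintype ι] (b : OrthonormalBasis ι 𝕜 E)
    (T : E →ₗ[𝕜] F) :
    RCLike.re (LinearMap.trace 𝕜 E (LinearMap.adjoint T ∘ₗ T)) = ∑ i, ‖T (b i)‖ ^ 2 := by
  simp only [LinearMap.trace_eq_sum_inner _ b, LinearMap.comp_apply,
    LinearMap.adjoint_inner_right, map_sum, inner_self_eq_norm_sq]

theorem finrank_eigenspace_mul_le_re_trace {S : E →ₗ[𝕜] E} (hS : S.IsPositive) (μ : ℝ) :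
    finrank 𝕜 (eigenspace S (μ : 𝕜)) * μ ≤ RCLike.re (LinearMap.trace 𝕜 E S) := by
  set l := hS.isSymmetric.eigenvalues rfl
  have card_filter : (Finset.card {i | l i = μ} : ℕ) = finrank 𝕜 (eigenspace S (μ : 𝕜)) := by
    simpa using hS.isSymmetric.card_filter_eigenvalues_eq rfl (μ : 𝕜)
  calc (finrank 𝕜 (eigenspace S (μ : 𝕜)) : ℝ) * μ
      = ∑ i with l i = μ, l i := by
        rw [Finset.sum_congr rfl fun i hi ↦ (Finset.mem_filter.1 hi).2, Finset.sum_const,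
          nsmul_eq_mul, card_filter]
    _ ≤ ∑ i, l i := Finset.sum_le_univ_sum_of_nonneg (hS.nonneg_eigenvalues rfl)
    _ = RCLike.re (LinearMap.trace 𝕜 E S) :=
        (hS.isSymmetric.re_trace_eq_sum_eigenvalues rfl).symm

theorem re_inner_apply_le_of_forall_hasEigenvalue_le {S : E →ₗ[𝕜] E} (hS : S.IsSymmetric) {c : ℝ}
    (hc : ∀ μ : ℝ, HasEigenvalue S (μ : 𝕜) → μ ≤ c) (f : E) :
    RCLike.re (inner 𝕜 (S f) f) ≤ c * ‖f‖ ^ 2 := by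
  set l := hS.eigenvalues rfl
  set e := hS.eigenvectorBasis rfl
  have re_inner_eq : RCLike.re (inner 𝕜 (S f) f) = ∑ i, l i * ‖inner 𝕜 (e i) f‖ ^ 2 := by
    rw [← e.sum_inner_mul_inner, map_sum]
    refine Finset.sum_congr rfl fun i _ ↦ ?_
    have apply_e : S (e i) = (l i : 𝕜) • e i := hS.apply_eigenvectorBasis rfl i
    rw [hS f (e i), apply_e, inner_smul_right, mul_assoc, RCLike.re_ofReal_mul,
      inner_mul_symm_re_eq_norm, norm_mul, norm_inner_symm, ← sq]
  rw [re_inner_eq, ← e.sum_sq_norm_inner_right f, Finset.mul_sum]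
  gcongr with i
  exact hc _ (hS.hasEigenvalue_eigenvalues rfl i)

theorem mul_norm_sq_apply_le_of_forall_le_finrank_eigenspace {ι : Type*} [Fintype ι]
    (b : OrthonormalBasis ι 𝕜 E) (T : E →ₗ[𝕜] F) {d : ℕ}
    (hd : ∀ μ : 𝕜, μ ≠ 0 → HasEigenvalue (LinearMap.adjoint T ∘ₗ T) μ →
      d ≤ finrank 𝕜 (eigenspace (LinearMap.adjoint T ∘ₗ T) μ)) (f : E) :
    d * ‖T f‖ ^ 2 ≤ (∑ i, ‖T (b i)‖ ^ 2) * ‖f‖ ^ 2 := by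
  set S := LinearMap.adjoint T ∘ₗ T with hS
  have S_pos : S.IsPositive := T.isPositive_adjoint_comp_self
  rw [← re_trace_adjoint_comp_self b T]
  set c := RCLike.re (LinearMap.trace 𝕜 E S)
  have c_nonneg : 0 ≤ c := by simpa using finrank_eigenspace_mul_le_re_trace S_pos 0
  obtain rfl | d_pos := d.eq_zero_or_pos
  · simpa using by positivity
  have eigenvalue_le (μ : ℝ) (hμ : HasEigenvalue S (μ : 𝕜)) : μ ≤ c / d := by
    rw [le_div_iff₀' (by positivity)]
    obtain hμ_nonpos | hμ_pos := le_or_gt μ 0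
    · exact (mul_nonpos_of_nonneg_of_nonpos d.cast_nonneg hμ_nonpos).trans c_nonneg
    · calc d * μ ≤ finrank 𝕜 (eigenspace S (μ : 𝕜)) * μ := by
            gcongr
            exact hd _ (RCLike.ofReal_ne_zero.2 hμ_pos.ne') hμ
        _ ≤ c := finrank_eigenspace_mul_le_re_trace S_pos μ
  have norm_sq_le : ‖T f‖ ^ 2 ≤ c / d * ‖f‖ ^ 2 := by
    simpa only [hS, LinearMap.comp_apply, LinearMap.adjoint_inner_left, inner_self_eq_norm_sq]
      using re_inner_apply_le_of_forall_hasEigenvalue_le S_pos.isSymmetric eigenvalue_le f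
  calc d * ‖T f‖ ^ 2 ≤ d * (c / d * ‖f‖ ^ 2) := by gcongr
    _ = c * ‖f‖ ^ 2 := by field_simp

end Spectral

section Quasirandom

open Module Module.End
open scoped BigOperators

universe u

/-- A group is `d`-quasirandom, in the sense of Gowers, if its nontrivial finite-dimensional
complex representations all have dimension at least `d`. Restricting to representation spaces in
the universe of `G` loses nothing, since the condition is invariant under isomorphism. -/
def IsQuasirandom (G : Type u) [Group G] (d : ℕ) : Prop :=
  ∀ (V : Type u) [AddCommGroup V] [Module ℂ V] [FiniteDimensional ℂ V] (ρ : Representation ℂ G V),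
    ¬ ρ.IsTrivial → d ≤ finrank ℂ V

variable {G : Type u} [Group G] {d : ℕ}

theorem IsQuasirandom.le_finrank_eigenspace (hG : IsQuasirandom G d) {V : Type u}
    [AddCommGroup V] [Module ℂ V] [FiniteDimensional ℂ V] {ρ : Representation ℂ G V} {S : End ℂ V}
    (hcomm : ∀ g, Commute S (ρ g)) (hinv : ∀ v ∈ ρ.invariants, S v = 0) {μ : ℂ} (hμ : μ ≠ 0)
    (hSμ : HasEigenvalue S μ) : d ≤ finrank ℂ (eigenspace S μ) := by
  let σ := Representation.subrepresentation ρ (eigenspace S μ) fun g v hv ↦ by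
    rw [Submodule.mem_comap, mem_eigenspace_iff, ← Module.End.mul_apply, (hcomm g).eq,
      Module.End.mul_apply, mem_eigenspace_iff.1 hv, map_smul]
  refine hG _ σ fun hσ ↦ ?_
  obtain ⟨v, hv⟩ := hSμ.exists_hasEigenvector
  have v_mem : v ∈ ρ.invariants := fun g ↦
    congrArg Subtype.val (LinearMap.congr_fun (hσ.out g) ⟨v, hv.1⟩)
  exact smul_ne_zero hμ hv.2 (hv.apply_eq_smul.symm.trans (hinv v v_mem))

theorem IsQuasirandom.mul_norm_sq_apply_le (hG : IsQuasirandom G d) {V : Type u} {ι : Type*}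
    [NormedAddCommGroup V] [InnerProductSpace ℂ V] [FiniteDimensional ℂ V] [Fintype ι]
    (b : OrthonormalBasis ι ℂ V) {ρ : Representation ℂ G V} (hρ : ∀ g, star (ρ g) = ρ g⁻¹)
    {T : End ℂ V} (hcomm : ∀ g, Commute T (ρ g)) (hinv : ∀ v ∈ ρ.invariants, T v = 0) (f : V) :
    d * ‖T f‖ ^ 2 ≤ (∑ i, ‖T (b i)‖ ^ 2) * ‖f‖ ^ 2 := by
  refine mul_norm_sq_apply_le_of_forall_le_finrank_eigenspace b T (fun μ hμ hSμ ↦ ?_) f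
  refine hG.le_finrank_eigenspace (ρ := ρ) (fun g ↦ ?_) (fun v hv ↦ ?_) hμ hSμ
  · have star_comm : Commute (star T) (ρ g) := by
      simpa only [hρ, inv_inv] using (hcomm g⁻¹).star_star
    exact star_comm.mul_left (hcomm g)
  · rw [LinearMap.comp_apply, hinv v hv, map_zero]

variable (G) in
/-- The right regular representation on `ℓ²(G)`, given by `(g • f) x = f (x * g)`. -/
noncomputable def rightTranslation : Representation ℂ G (EuclideanSpace ℂ G) where
  toFun g :=
    { toFun f := WithLp.toLp 2 fun x ↦ f (x * g)
      map_add' _ _ := rfl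
      map_smul' _ _ := rfl }
  map_one' := by
    ext f x
    exact congrArg f (mul_one x)
  map_mul' g h := by
    ext f x
    exact congrArg f (mul_assoc x g h).symm

@[simp]
theorem rightTranslation_apply (g x : G) (f : EuclideanSpace ℂ G) :
    rightTranslation G g f x = f (x * g) := rfl

theorem apply_eq_of_mem_invariants_rightTranslation {f : EuclideanSpace ℂ G}
    (hf : f ∈ (rightTranslation G).invariants) (x : G) : f x = f 1 := by
  simpa using congrArg (· 1) (hf x)

variable [Fintype G]

theorem star_rightTranslation (g : G) :
    star (rightTranslation G g) = rightTranslation G g⁻¹ := by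
  rw [LinearMap.star_eq_adjoint, eq_comm, LinearMap.eq_adjoint_iff]
  intro f f'
  simp only [PiLp.inner_apply, rightTranslation_apply]
  exact Fintype.sum_equiv (Equiv.mulRight g⁻¹) _ _ fun x ↦ by simp

/-- The operator `f ↦ a ∗ f` of left convolution by `a` on `ℓ²(G)`, as the matrix
`(a (x / y))`. -/
noncomputable def convolution [DecidableEq G] (a : G → ℂ) : End ℂ (EuclideanSpace ℂ G) :=
  Matrix.toEuclideanLin (.of fun x y ↦ a (x / y))

section

variable [DecidableEq G] (a : G → ℂ)

theorem convolution_apply (f : EuclideanSpace ℂ G) (x : G) :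
    convolution a f x = ∑ y, a (x / y) * f y := rfl

theorem commute_convolution_rightTranslation (g : G) :
    Commute (convolution a) (rightTranslation G g) := by
  ext f x
  simp only [Module.End.mul_apply, rightTranslation_apply, convolution_apply]
  exact Fintype.sum_equiv (Equiv.mulRight g) _ _ fun y ↦ by simp [mul_div_mul_right_eq_div]

theorem convolution_apply_eq_zero_of_mem_invariants {a : G → ℂ} (ha : ∑ x, a x = 0)
    {f : EuclideanSpace ℂ G} (hf : f ∈ (rightTranslation G).invariants) :
    convolution a f = 0 := by
  ext x
  simp only [convolution_apply, apply_eq_of_mem_invariants_rightTranslation hf, ← Finset.sum_mul]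
  rw [Fintype.sum_equiv (Equiv.divLeft x) (fun y ↦ a (x / y)) a fun _ ↦ rfl, ha, zero_mul,
    PiLp.zero_apply]

theorem sum_norm_sq_convolution_basisFun :
    ∑ y, ‖convolution a (EuclideanSpace.basisFun G ℂ y)‖ ^ 2 =
      Fintype.card G * ∑ x, ‖a x‖ ^ 2 := by
  have norm_sq (y : G) :
      ‖convolution a (EuclideanSpace.basisFun G ℂ y)‖ ^ 2 = ∑ x, ‖a x‖ ^ 2 := by
    rw [EuclideanSpace.norm_sq_eq]
    refine Fintype.sum_equiv (Equiv.divRight y) _ _ fun x ↦ ?_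
    simp [convolution_apply]
  simp only [norm_sq, Finset.sum_const, Finset.card_univ, nsmul_eq_mul]

end

theorem IsQuasirandom.mul_norm_sq_convolution_le [DecidableEq G] (hG : IsQuasirandom G d)
    {a : G → ℂ} (ha : ∑ x, a x = 0) (f : EuclideanSpace ℂ G) :
    d * ‖convolution a f‖ ^ 2 ≤ Fintype.card G * (∑ x, ‖a x‖ ^ 2) * ‖f‖ ^ 2 := by
  rw [← sum_norm_sq_convolution_basisFun]
  exact hG.mul_norm_sq_apply_le _ star_rightTranslation
    (commute_convolution_rightTranslation a)
    (fun _ ↦ convolution_apply_eq_zero_of_mem_invariants ha) f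

theorem sum_norm_sq_balance_le {𝕜 α : Type*} [RCLike 𝕜] [Fintype α] (f : α → 𝕜) :
    ∑ x, ‖Fintype.balance f x‖ ^ 2 ≤ ∑ x, ‖f x‖ ^ 2 := by
  set c := 𝔼 y, f y
  have norm_sq_eq (x : α) : ‖f x‖ ^ 2 = ‖Fintype.balance f x‖ ^ 2 +
      2 * RCLike.re (inner 𝕜 c (Fintype.balance f x)) + ‖c‖ ^ 2 := by
    rw [← inner_re_symm, ← norm_add_sq, Fintype.balance_apply, sub_add_cancel]
  have cross_eq_zero : ∑ x, 2 * RCLike.re (inner 𝕜 c (Fintype.balance f x)) = 0 := by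
    rw [← Finset.mul_sum, ← map_sum, ← inner_sum, Fintype.sum_balance, inner_zero_right, map_zero,
      mul_zero]
  simp only [norm_sq_eq, Finset.sum_add_distrib, cross_eq_zero, add_zero]
  exact le_add_of_nonneg_right (by positivity)

section

variable [DecidableEq G]

theorem convolution_balance_apply_of_notMem_mul {A B : Finset G} {x : G} (hx : x ∉ A * B) :
    convolution (Fintype.balance fun y ↦ if y ∈ A then 1 else 0)
      (WithLp.toLp 2 fun y ↦ if y ∈ B then 1 else 0) x = -(A.card * B.card / Fintype.card G) := by
  have term_eq_zero (y : G) :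
      (if x / y ∈ A then (1 : ℂ) else 0) * (if y ∈ B then 1 else 0) = 0 := by
    by_contra h
    simp only [mul_ite, mul_one, mul_zero, ite_eq_right_iff, Classical.not_imp] at h
    exact hx (Finset.mem_mul.2 ⟨_, h.2.1, _, h.1, div_mul_cancel x y⟩)
  simp only [convolution_apply, Fintype.balance_apply, sub_mul, Finset.sum_sub_distrib,
    term_eq_zero, ← Finset.mul_sum, Fintype.expect_eq_sum_div_card]
  simp only [Finset.sum_const_zero, Finset.sum_ite_mem, Finset.univ_inter, Finset.sum_const,
    nsmul_eq_mul, mul_one, zero_sub, neg_inj]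
  ring

theorem card_compl_mul_le_norm_sq_convolution_balance (A B : Finset G) :
    (A * B)ᶜ.card * (A.card * B.card / Fintype.card G : ℝ) ^ 2 ≤
      ‖convolution (Fintype.balance fun y ↦ if y ∈ A then 1 else 0)
        (WithLp.toLp 2 fun y ↦ if y ∈ B then 1 else 0)‖ ^ 2 := by
  rw [EuclideanSpace.norm_sq_eq, ← nsmul_eq_mul, ← Finset.sum_const]
  refine (Finset.sum_le_sum fun x hx ↦ ?_).trans
    (Finset.sum_le_univ_sum_of_nonneg fun x ↦ sq_nonneg _)
  rw [convolution_balance_apply_of_notMem_mul (Finset.mem_compl.1 hx)]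
  simp

theorem IsQuasirandom.mul_card_mul_card_compl_mul_le (hG : IsQuasirandom G d) (A B : Finset G) :
    d * (A.card * B.card * (A * B)ᶜ.card) ≤ Fintype.card G ^ 3 := by
  set n := Fintype.card G
  set a : G → ℂ := Fintype.balance fun y ↦ if y ∈ A then 1 else 0
  set f : EuclideanSpace ℂ G := WithLp.toLp 2 fun y ↦ if y ∈ B then 1 else 0
  set t : ℝ := A.card * B.card with t_def
  have sum_norm_sq_a : ∑ x, ‖a x‖ ^ 2 ≤ A.card := by
    refine (sum_norm_sq_balance_le _).trans_eq ?_
    simp [apply_ite]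
  have norm_sq_f : ‖f‖ ^ 2 = B.card := by
    simp [f, EuclideanSpace.norm_sq_eq, apply_ite]
  have n_pos : (0 : ℝ) < n := Nat.cast_pos.2 Fintype.card_pos
  have key : d * ((A * B)ᶜ.card * (t / n) ^ 2) ≤ n * t :=
    calc d * ((A * B)ᶜ.card * (t / n) ^ 2) ≤ d * ‖convolution a f‖ ^ 2 := by
          gcongr
          exact card_compl_mul_le_norm_sq_convolution_balance A B
      _ ≤ n * (∑ x, ‖a x‖ ^ 2) * ‖f‖ ^ 2 := hG.mul_norm_sq_convolution_le (Fintype.sum_balance _) f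
      _ ≤ n * A.card * B.card := by gcongr; exact norm_sq_f.le
      _ = n * t := mul_assoc _ _ _
  have real_le : d * (t * (A * B)ᶜ.card) ≤ (n : ℝ) ^ 3 := by
    obtain t_zero | t_pos : t = 0 ∨ 0 < t := (show 0 ≤ t by positivity).eq_or_lt'
    · simp [t_zero]
    · refine le_of_mul_le_mul_right ?_ t_pos
      calc d * (t * (A * B)ᶜ.card) * t = d * ((A * B)ᶜ.card * (t / n) ^ 2) * n ^ 2 := by
            field_simp
        _ ≤ n * t * n ^ 2 := by gcongr
        _ = n ^ 3 * t := by ring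
  rw [t_def] at real_le
  exact_mod_cast real_le

theorem IsQuasirandom.mul_mul_eq_univ (hG : IsQuasirandom G d) {A B C : Finset G}
    (h : Fintype.card G ^ 3 < d * (A.card * B.card * C.card)) : A * B * C = Finset.univ := by
  refine Finset.eq_univ_of_forall fun g ↦ by_contra fun hg ↦ h.not_ge ?_
  have card_le : C.card ≤ (A * B)ᶜ.card := by
    refine Finset.card_le_card_of_injOn (g / ·) (fun c hc ↦ ?_) div_right_injective.injOn
    refine Finset.mem_coe.2 <| Finset.mem_compl.2 fun h_mem ↦ hg ?_
    simpa using Finset.mul_mem_mul h_mem hc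
  calc d * (A.card * B.card * C.card) ≤ d * (A.card * B.card * (A * B)ᶜ.card) := by gcongr
    _ ≤ Fintype.card G ^ 3 := hG.mul_card_mul_card_compl_mul_le A B

end

end Quasirandom

section WeightSpace

open Module Module.End

variable {A V : Type*} [AddCommGroup A] [AddCommGroup V] [Module ℂ V]

/-- The `ψ`-weight space of a representation `σ` of an abelian group `A`, the space of vectors on
which `A` acts through `ψ`. The group is written additively to make `ψ` an `AddChar`. -/
def weightSpace (σ : Representation ℂ (Multiplicative A) V) (ψ : AddChar A ℂ) : Submodule ℂ V :=
  ⨅ a, eigenspace (σ (.ofAdd a)) (ψ a)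

variable {σ : Representation ℂ (Multiplicative A) V}

theorem mem_weightSpace_iff {ψ : AddChar A ℂ} {v : V} :
    v ∈ weightSpace σ ψ ↔ ∀ a, σ (.ofAdd a) v = ψ a • v := by
  simp only [weightSpace, Submodule.mem_iInf, mem_eigenspace_iff]

variable (σ) in
theorem iSupIndep_weightSpace : iSupIndep (weightSpace σ) := by
  have commute (a b : A) : Commute (σ (.ofAdd a)) (σ (.ofAdd b)) :=
    (Commute.all (Multiplicative.ofAdd a) (Multiplicative.ofAdd b)).map σ
  have indep := independent_iInf_maxGenEigenspace_of_forall_mapsTo (fun a ↦ σ (.ofAdd a))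
    fun a b μ ↦ mapsTo_maxGenEigenspace_of_comm (commute b a) μ
  have coe_injective : Function.Injective fun ψ : AddChar A ℂ ↦ (ψ : A → ℂ) :=
    DFunLike.coe_injective
  exact (indep.comp coe_injective).mono fun ψ ↦
    iInf_mono fun a ↦ eigenspace_le_maxGenEigenspace

theorem card_le_finrank_of_weightSpace_ne_bot [FiniteDimensional ℂ V] (s : Finset (AddChar A ℂ))
    (hs : ∀ ψ ∈ s, weightSpace σ ψ ≠ ⊥) : s.card ≤ finrank ℂ V := by
  classical
  calc s.card = Fintype.card {ψ : s // weightSpace σ ψ.1 ≠ ⊥} := by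
        rw [← Fintype.card_coe s]
        exact (Fintype.card_congr (Equiv.subtypeUnivEquiv fun ψ : s ↦ hs ψ.1 ψ.2)).symm
    _ ≤ finrank ℂ V :=
        ((iSupIndep_weightSpace σ).comp Subtype.val_injective).subtype_ne_bot_le_finrank

variable (σ) in
theorem sum_smul_apply_mem_weightSpace [Fintype A] (ψ : AddChar A ℂ) (v : V) :
    ∑ a, ψ (-a) • σ (.ofAdd a) v ∈ weightSpace σ ψ := by
  refine mem_weightSpace_iff.2 fun b ↦ ?_
  rw [map_sum, Finset.smul_sum]
  refine Fintype.sum_equiv (Equiv.addLeft b) _ _ fun a ↦ ?_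
  rw [map_smul, ← Module.End.mul_apply, ← map_mul, smul_smul, ← AddChar.map_add_eq_mul]
  simp

theorem sum_sum_smul_apply [Fintype A] (v : V) :
    ∑ ψ : AddChar A ℂ, ∑ a, ψ (-a) • σ (.ofAdd a) v = (Fintype.card A : ℂ) • v := by
  classical
  rw [Finset.sum_comm]
  simp [← Finset.sum_smul, AddChar.sum_apply_eq_ite]

theorem exists_ne_one_weightSpace_ne_bot [Finite A] (hσ : ¬ σ.IsTrivial) :
    ∃ ψ : AddChar A ℂ, ψ ≠ 1 ∧ weightSpace σ ψ ≠ ⊥ := by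
  have := Fintype.ofFinite A
  by_contra! weight_eq_bot
  refine hσ ⟨fun g ↦ LinearMap.ext fun v ↦ ?_⟩
  have sum_eq_zero (ψ : AddChar A ℂ) (hψ : ψ ≠ 1) : ∑ a, ψ (-a) • σ (.ofAdd a) v = 0 := by
    simpa only [weight_eq_bot ψ hψ, Submodule.mem_bot] using sum_smul_apply_mem_weightSpace σ ψ v
  have card_smul_mem : (Fintype.card A : ℂ) • v ∈ weightSpace σ 1 := by
    rw [← sum_sum_smul_apply, Fintype.sum_eq_single 1 sum_eq_zero]
    exact sum_smul_apply_mem_weightSpace σ 1 v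
  have h := mem_weightSpace_iff.1 card_smul_mem g.toAdd
  rw [map_smul, AddChar.one_apply, one_smul] at h
  exact smul_right_injective V (Nat.cast_ne_zero.2 Fintype.card_ne_zero) h

end WeightSpace

section SpecialLinear

open Module Matrix Matrix.SpecialLinearGroup
open scoped MatrixGroups

variable {F : Type*} [Field F]

variable (F) in
/-- The upper unipotent subgroup of `SL(2, F)`, parametrised by the additive group of `F`. -/
def upperUnipotent : Multiplicative F →* SL(2, F) where
  toFun t := transvection zero_ne_one t.toAdd
  map_one' := transvection_coeff_zero _
  map_mul' s t := transvection_add _ s.toAdd t.toAdd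

theorem coe_upperUnipotent (t : Multiplicative F) :
    (upperUnipotent F t : Matrix (Fin 2) (Fin 2) F) = !![1, t.toAdd; 0, 1] := by
  ext i j
  fin_cases i <;> fin_cases j <;> simp [upperUnipotent, transvection_coe]

theorem upperUnipotent_mul_diag2_inv (a : Fˣ) (t : F) :
    upperUnipotent F (.ofAdd t) * (diag2 (a : F) a.ne_zero)⁻¹ =
      (diag2 (a : F) a.ne_zero)⁻¹ * upperUnipotent F (.ofAdd (a ^ 2 * t)) := by
  refine Matrix.SpecialLinearGroup.ext _ _ (Matrix.ext_iff.2 ?_)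
  simp only [diag2_inv, coe_mul, coe_upperUnipotent, diag2_coe', mul_fin_two, toAdd_ofAdd]
  simp [pow_two, mul_assoc, mul_comm t]

theorem exists_transvection_eq_conj_upperUnipotent {i j : Fin 2} (hij : i ≠ j) (c : F) :
    ∃ g t, transvection hij c = g * upperUnipotent F t * g⁻¹ := by
  obtain ⟨rfl, rfl⟩ | ⟨rfl, rfl⟩ : i = 0 ∧ j = 1 ∨ i = 1 ∧ j = 0 := by omega
  · exact ⟨1, .ofAdd c, by simp [upperUnipotent]⟩
  · let w : SL(2, F) := ⟨!![0, -1; 1, 0], by simp⟩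
    have coe_w : (w : Matrix (Fin 2) (Fin 2) F) = !![0, -1; 1, 0] := rfl
    have coe_transvection : (transvection hij c : Matrix (Fin 2) (Fin 2) F) = !![1, 0; c, 1] := by
      ext i j
      fin_cases i <;> fin_cases j <;> simp [transvection_coe]
    refine ⟨w, .ofAdd (-c), eq_mul_inv_of_mul_eq ?_⟩
    refine Matrix.SpecialLinearGroup.ext _ _ (Matrix.ext_iff.2 ?_)
    simp only [Matrix.SpecialLinearGroup.coe_mul, coe_transvection, coe_w,
      coe_upperUnipotent, mul_fin_two]
    simp

variable {V : Type*} [AddCommGroup V] [Module ℂ V] {ρ : Representation ℂ SL(2, F) V}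

theorem isTrivial_of_isTrivial_comp_upperUnipotent
    (hρ : Representation.IsTrivial (ρ.comp (upperUnipotent F))) : ρ.IsTrivial := by
  refine ⟨SL2.transvection_induction _ (fun i j hij c ↦ ?_) fun g h hg hh ↦ ?_⟩
  · obtain ⟨g, t, h⟩ := exists_transvection_eq_conj_upperUnipotent hij c
    have apply_t : ρ (upperUnipotent F t) = 1 := hρ.out t
    rw [h, map_mul, map_mul, apply_t, mul_one, ← map_mul, mul_inv_cancel, map_one]
    rfl
  · rw [map_mul, hg, hh]
    rfl

theorem weightSpace_mulShift_sq_ne_bot {ψ : AddChar F ℂ}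
    (hψ : weightSpace (ρ.comp (upperUnipotent F)) ψ ≠ ⊥) (a : Fˣ) :
    weightSpace (ρ.comp (upperUnipotent F)) (ψ.mulShift (a ^ 2)) ≠ ⊥ := by
  obtain ⟨v, hv, v_ne⟩ := Submodule.exists_mem_ne_zero_of_ne_bot hψ
  refine Submodule.ne_bot_iff _ |>.2 ⟨ρ (diag2 (a : F) a.ne_zero)⁻¹ v, ?_, ?_⟩
  · refine mem_weightSpace_iff.2 fun t ↦ ?_
    have apply_v : ρ (upperUnipotent F (.ofAdd (a ^ 2 * t))) v = ψ (a ^ 2 * t) • v :=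
      mem_weightSpace_iff.1 hv (a ^ 2 * t)
    rw [MonoidHom.comp_apply, ← Module.End.mul_apply, ← map_mul, upperUnipotent_mul_diag2_inv,
      map_mul, Module.End.mul_apply, apply_v, map_smul, AddChar.mulShift_apply]
  · exact (map_ne_zero_iff _ (ρ.apply_bijective _).injective).2 v_ne

variable [Fintype F]

theorem card_div_two_le_card_image_sq_units [DecidableEq F] :
    Fintype.card F / 2 ≤ (Finset.univ.image fun a : Fˣ ↦ (a ^ 2 : F)).card := by
  have card_fiber_le : ∀ b ∈ Finset.univ.image fun a : Fˣ ↦ (a ^ 2 : F),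
      (Finset.univ.filter fun a : Fˣ ↦ (a ^ 2 : F) = b).card ≤ 2 := by
    simp only [Finset.forall_mem_image]
    intro a _
    refine (Finset.card_le_card fun c hc ↦ ?_).trans (Finset.card_le_two (a := a) (b := -a))
    simpa [sq_eq_sq_iff_eq_or_eq_neg, Units.ext_iff] using hc
  have card_units_le := Finset.card_le_mul_card_image Finset.univ 2 card_fiber_le
  rw [Finset.card_univ, Fintype.card_units] at card_units_le
  omega

theorem isQuasirandom_specialLinearGroup_two : IsQuasirandom SL(2, F) (Fintype.card F / 2) := by
  classical
  intro V _ _ _ ρ hρ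
  obtain ⟨ψ, ψ_ne, hψ⟩ := exists_ne_one_weightSpace_ne_bot (σ := ρ.comp (upperUnipotent F))
    fun hσ ↦ hρ (isTrivial_of_isTrivial_comp_upperUnipotent hσ)
  have mulShift_injective := AddChar.to_mulShift_inj_of_isPrimitive (.of_ne_one ψ_ne)
  calc Fintype.card F / 2 ≤ (Finset.univ.image fun a : Fˣ ↦ (a ^ 2 : F)).card :=
        card_div_two_le_card_image_sq_units
    _ = ((Finset.univ.image fun a : Fˣ ↦ (a ^ 2 : F)).image ψ.mulShift).card :=
        (Finset.card_image_of_injective _ mulShift_injective).symm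
    _ ≤ finrank ℂ V := by
        refine card_le_finrank_of_weightSpace_ne_bot (σ := ρ.comp (upperUnipotent F)) _ ?_
        simpa using weightSpace_mulShift_sq_ne_bot hψ

theorem card_specialLinearGroup_two_le [DecidableEq F] :
    Fintype.card SL(2, F) ≤ Fintype.card F ^ 3 := by
  have entries_injective : Function.Injective fun g : SL(2, F) ↦
      (g 0 0, g 0 1, if g 0 0 = 0 then g 1 1 else g 1 0) := by
    intro g h hgh
    have det_g := g.det_coe
    have det_h := h.det_coe
    rw [Matrix.det_fin_two] at det_g det_h
    simp only [Prod.mk.injEq] at hgh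
    rw [Matrix.SpecialLinearGroup.ext_iff]
    simp only [Fin.forall_fin_two]
    grind
  calc Fintype.card SL(2, F) ≤ Fintype.card (F × F × F) :=
        Fintype.card_le_of_injective _ entries_injective
    _ = Fintype.card F ^ 3 := by simp only [Fintype.card_prod, pow_three]

theorem stmt_11_general [DecidableEq F] {A B C : Finset SL(2, F)}
    (h : 2 ^ 9 * Fintype.card SL(2, F) ^ 8 ≤ (A.card * B.card * C.card) ^ 3) :
    A * B * C = Finset.univ := by
  refine isQuasirandom_specialLinearGroup_two.mul_mul_eq_univ ?_
  set n := Fintype.card SL(2, F)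
  set q := Fintype.card F
  set t := A.card * B.card * C.card
  have q_gt : 1 < q := Fintype.one_lt_card
  refine lt_of_pow_lt_pow_left₀ 3 (Nat.zero_le _) ?_
  calc (n ^ 3) ^ 3 = n * n ^ 8 := by ring
    _ ≤ q ^ 3 * n ^ 8 := by gcongr; exact card_specialLinearGroup_two_le
    _ < (8 * (q / 2)) ^ 3 * n ^ 8 := by gcongr; omega
    _ = (q / 2) ^ 3 * (2 ^ 9 * n ^ 8) := by ring
    _ ≤ (q / 2) ^ 3 * t ^ 3 := by gcongr
    _ = (q / 2 * t) ^ 3 := (mul_pow _ _ _).symm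

end SpecialLinear

/-- **Quasi-randomness of `SL₂(𝔽_p)` (Gowers–Nikolov–Pyber; Proposition `pr-qr`).**
For a prime `p ≥ 3`, if `H ⊆ SL₂(𝔽_p)` satisfies `|H| ≥ 2·|SL₂(𝔽_p)|^(8/9)`
(equivalently `|H|⁹ ≥ 2⁹·|SL₂(𝔽_p)|⁸`), then `H·H·H = SL₂(𝔽_p)`. -/
theorem stmt_11 (p : ℕ) [Fact p.Prime] (hp : 3 ≤ p)
    (H : Finset (Matrix.SpecialLinearGroup (Fin 2) (ZMod p)))
    (hbig : 2 ^ 9 * Fintype.card (Matrix.SpecialLinearGroup (Fin 2) (ZMod p)) ^ 8 ≤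
      H.card ^ 9) :
    (H ^ 3 : Finset (Matrix.SpecialLinearGroup (Fin 2) (ZMod p))) = Finset.univ := by
  rw [pow_three']
  exact stmt_11_general (hbig.trans_eq (by ring))
end

section
/- Let p ≥ 7 be a prime and let H be a symmetric generating set of SL₂(𝔽_p) containing the identity. Then H^(3) contains a regular semisimple element of nonzero trace, i.e. there exists x ∈ H^(3) with tr(x) ≠ 0 and tr(x)² ≠ 4. -/
open Pointwise

/-!
Suppose every trace in `H ^ 3` is a root of `X³ - 4X`, that is, `0` or `±2`.

If `A ∈ H` has `tr A = ±2`, then for each `B ∈ H` the traces of `A⁻¹B`, `B`, `AB`, `A²B` are, up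
to signs, four consecutive terms of an arithmetic progression. All of them are roots of an odd
cubic, so its third difference vanishes and the progression is constant. Hence the nilpotent matrix
`2A - tr A` is trace-orthogonal to the generating set `H`. This forces it to vanish, since otherwise
`H` would preserve its kernel. So every noncentral element of `H` has trace `0`.

For `A, B ∈ H` of trace `0`, either `tr (AB) = 0` and `A`, `B` anticommute, or `tr (AB) = ±2`. In
the latter case the Fricke identity for `tr (ABC)` shows in the same way that `AB` is central, and
`A`, `B` commute. A noncentral `A ∈ H` is therefore conjugated to `±A` by the whole group, so it
commutes with all squares, in particular with the transvections by even scalars, and is central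
after all.
-/

open Matrix Matrix.SpecialLinearGroup MatrixGroups

section Group

lemma mul_mul_mem_pow_three {M : Type*} [Monoid M] {S : Set M} {a b c : M}
    (ha : a ∈ S) (hb : b ∈ S) (hc : c ∈ S) : a * b * c ∈ S ^ 3 := by
  rw [pow_succ, pow_two]
  exact Set.mul_mem_mul (Set.mul_mem_mul ha hb) hc

lemma mul_mem_pow_three {M : Type*} [Monoid M] {S : Set M} (h_one : 1 ∈ S) {a b : M}
    (ha : a ∈ S) (hb : b ∈ S) : a * b ∈ S ^ 3 := by
  simpa only [mul_one] using mul_mul_mem_pow_three ha hb h_one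

lemma commute_of_mul_mem_center {G : Type*} [Group G] {a b : G} (h : a * b ∈ Subgroup.center G) :
    Commute a b := by
  have h_comm : a * (a * b) = a * b * a := Subgroup.mem_center_iff.mp h a
  exact mul_left_cancel (h_comm.trans (mul_assoc a b a))

lemma semiconjBy_self_or_neg_of_mem_closure {G : Type*} [Group G] [HasDistribNeg G] {S : Set G}
    {a : G} (h : ∀ g ∈ S, SemiconjBy g a a ∨ SemiconjBy g a (-a)) {g : G}
    (hg : g ∈ Subgroup.closure S) : SemiconjBy g a a ∨ SemiconjBy g a (-a) := by
  induction hg using Subgroup.closure_induction with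
  | mem g hg => exact h g hg
  | one => exact .inl (.one_left a)
  | mul x y _ _ hx hy =>
    rcases hx with hx | hx <;> rcases hy with hy | hy
    · exact .inl (hx.mul_left hy)
    · exact .inr (hx.neg_right.mul_left hy)
    · exact .inr (hx.mul_left hy)
    · exact .inl (by simpa using hx.neg_right.mul_left hy)
  | inv x _ hx =>
    refine hx.imp (fun hx => hx.inv_symm_left) fun hx => ?_
    simpa using hx.inv_symm_left.neg_right

lemma commute_sq_of_semiconjBy_self_or_neg {G : Type*} [Group G] [HasDistribNeg G] {g a : G}
    (h : SemiconjBy g a a ∨ SemiconjBy g a (-a)) : Commute (g ^ 2) a := by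
  rw [pow_two]
  rcases h with h | h
  · exact h.mul_left h
  · simpa [Commute] using h.neg_right.mul_left h

end Group

section Arithmetic

variable {R : Type*} [CommRing R] [IsDomain R]

-- With `a = 2e` and `e² = 1`, the four cubics say that `e * t + k * (x - e * t)` is a root of
-- `X³ - 4X` for `k = -1, 0, 1, 2`; the third difference of the cubic is six times the cube of
-- the step.
lemma two_mul_eq_mul_of_cubic_roots (h3 : (3 : R) ≠ 0) {a t x : R} (ha : a ^ 2 = 4)
    (ht : t ^ 3 = 4 * t) (hx : x ^ 3 = 4 * x) (h_prev : (a * t - x) ^ 3 = 4 * (a * t - x))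
    (h_next : (a * x - t) ^ 3 = 4 * (a * x - t)) : 2 * x = a * t := by
  have h_cube : 3 * (2 * x - a * t) ^ 3 = 0 := by
    linear_combination 2 * a * h_next - 12 * hx + 6 * a * ht - 4 * h_prev
      + (-2 * (a ^ 2 + 4) * x ^ 3 + 6 * a * x ^ 2 * t + a * t ^ 3 + 8 * x) * ha
  rw [← sub_eq_zero]
  exact pow_eq_zero_iff three_ne_zero |>.mp ((mul_eq_zero.mp h_cube).resolve_left h3)

lemma pow_three_eq_four_mul_iff {x : R} : x ^ 3 = 4 * x ↔ x = 0 ∨ x ^ 2 = 4 := by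
  rw [pow_succ, mul_eq_mul_right_iff, or_comm]

lemma eq_zero_of_sq_eq_neg_of_cubic_roots (h2 : (2 : R) ≠ 0) (h5 : (5 : R) ≠ 0) {q r s t : R}
    (hs : s ^ 2 = 4) (ht : t ^ 3 = 4 * t) (hr : r ^ 3 = 4 * r) (hq : q ^ 3 = 4 * q)
    (h : q ^ 2 = -(t ^ 2 + r ^ 2 + s * t * r)) : q = 0 := by
  rcases pow_three_eq_four_mul_iff.mp hq with hq0 | hq4
  · exact hq0
  have pow_two_ne_zero (n : ℕ) : (2 : R) ^ n ≠ 0 := pow_ne_zero n h2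
  rcases pow_three_eq_four_mul_iff.mp ht with ht0 | ht4 <;>
    rcases pow_three_eq_four_mul_iff.mp hr with hr0 | hr4
  · refine absurd ?_ (pow_two_ne_zero 2)
    rw [ht0, hr0] at h
    linear_combination h - hq4
  · refine absurd ?_ (pow_two_ne_zero 3)
    rw [ht0] at h
    linear_combination h - hq4 - hr4
  · refine absurd ?_ (pow_two_ne_zero 3)
    rw [hr0] at h
    linear_combination h - hq4 - ht4
  · have h_prod : s * t * r = -12 := by linear_combination h - hq4 - ht4 - hr4
    have h_prod_sq : (s * t * r) ^ 2 = 64 := by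
      linear_combination t ^ 2 * r ^ 2 * hs + 4 * r ^ 2 * ht4 + 16 * hr4
    refine absurd ?_ (mul_ne_zero (pow_two_ne_zero 4) h5)
    linear_combination h_prod_sq - (s * t * r - 12) * h_prod

end Arithmetic

variable {R : Type*} [CommRing R]

local notation:1024 "↑ₘ" A:1024 => ((A : SL(2, R)) : Matrix (Fin 2) (Fin 2) R)

section Trace

lemma mul_add_mul_eq_of_fin_two (A B : Matrix (Fin 2) (Fin 2) R) :
    A * B + B * A = B.trace • A + A.trace • B + ((A * B).trace - A.trace * B.trace) • 1 := by
  ext i j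
  fin_cases i <;> fin_cases j <;> simp [mul_apply, Fin.sum_univ_two, trace_fin_two] <;> ring

lemma mul_mul_self_eq_trace_smul {N : Matrix (Fin 2) (Fin 2) R} (h_sq : N * N = 0)
    (h_tr : N.trace = 0) (M : Matrix (Fin 2) (Fin 2) R) : N * M * N = (N * M).trace • N := by
  have h := congr_arg (N * ·) (mul_add_mul_eq_of_fin_two N M)
  simpa [mul_add, ← mul_assoc, h_sq, h_tr] using h

-- A case of the Fricke identity.
lemma trace_mul_mul_sq_of_trace_eq_zero {A B C : Matrix (Fin 2) (Fin 2) R} (hA : A.trace = 0)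
    (hB : B.trace = 0) (hC : C.trace = 0) :
    (A * B * C).trace ^ 2 = 4 * (A.det * B.det * C.det)
      - (A * B).trace * (A * C).trace * (B * C).trace
      - (A * B).trace ^ 2 * C.det - (A * C).trace ^ 2 * B.det - (B * C).trace ^ 2 * A.det := by
  rw [trace_fin_two, add_eq_zero_iff_neg_eq] at hA hB hC
  simp only [trace_fin_two, det_fin_two, mul_apply, Fin.sum_univ_two, ← hA, ← hB, ← hC]
  ring

lemma coe_inv_eq_trace_smul_one_sub (A : SL(2, R)) :
    ↑ₘ(A⁻¹) = (↑ₘA).trace • (1 : Matrix (Fin 2) (Fin 2) R) - ↑ₘA := by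
  rw [coe_inv, adjugate_fin_two]
  ext i j
  fin_cases i <;> fin_cases j <;> simp [trace_fin_two]

lemma coe_mul_self_eq_trace_smul_sub_one (A : SL(2, R)) :
    ↑ₘA * ↑ₘA = (↑ₘA).trace • ↑ₘA - 1 := by
  have h : ↑ₘA * ↑ₘ(A⁻¹) = 1 := by rw [← coe_mul, mul_inv_cancel, coe_one]
  rw [coe_inv_eq_trace_smul_one_sub, mul_sub, mul_smul_comm, mul_one] at h
  rw [← h, sub_sub_cancel]

lemma trace_inv_mul (A B : SL(2, R)) :
    (↑ₘ(A⁻¹ * B)).trace = (↑ₘA).trace * (↑ₘB).trace - (↑ₘ(A * B)).trace := by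
  simp only [coe_mul, coe_inv_eq_trace_smul_one_sub, sub_mul, smul_mul_assoc,
    one_mul, trace_sub, trace_smul, smul_eq_mul]

lemma trace_mul_self_mul (A B : SL(2, R)) :
    (↑ₘ(A * A * B)).trace = (↑ₘA).trace * (↑ₘ(A * B)).trace - (↑ₘB).trace := by
  have h := trace_inv_mul A (A * B)
  rw [inv_mul_cancel_left, ← mul_assoc] at h
  linear_combination h

lemma two_mul_trace_mul_of_mem_center (A : SL(2, R)) {C : SL(2, R)}
    (hC : C ∈ Subgroup.center SL(2, R)) :
    2 * (↑ₘ(A * C)).trace = (↑ₘA).trace * (↑ₘC).trace := by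
  obtain ⟨r, -, hr⟩ := mem_center_iff.mp hC
  rw [coe_mul, ← hr, scalar_apply, ← smul_one_eq_diagonal, mul_smul_comm, mul_one, trace_smul,
    trace_smul, trace_one, Fintype.card_fin]
  simp only [smul_eq_mul, Nat.cast_ofNat]
  ring

lemma semiconjBy_neg_of_trace_eq_zero {A B : SL(2, R)} (hA : (↑ₘA).trace = 0) (hB : (↑ₘB).trace = 0)
    (hAB : (↑ₘ(A * B)).trace = 0) : SemiconjBy B A (-A) := by
  have h := mul_add_mul_eq_of_fin_two ↑ₘA ↑ₘB
  rw [coe_mul] at hAB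
  rw [hA, hB, hAB] at h
  apply Subtype.ext
  simpa [add_eq_zero_iff_eq_neg'] using h

end Trace

section Generation

lemma coe_mem_of_closure_eq_top {S : Set SL(2, R)} (hS : Subgroup.closure S = ⊤)
    {𝒜 : Subalgebra R (Matrix (Fin 2) (Fin 2) R)} (h : ∀ g ∈ S, ↑ₘg ∈ 𝒜) (g : SL(2, R)) :
    ↑ₘg ∈ 𝒜 := by
  have hg : g ∈ Subgroup.closure S := hS ▸ Subgroup.mem_top g
  induction hg using Subgroup.closure_induction with
  | mem g hg => exact h g hg
  | one => exact one_mem 𝒜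
  | mul x y _ _ hx hy => exact mul_mem hx hy
  | inv x _ hx =>
    rw [coe_inv_eq_trace_smul_one_sub]
    exact sub_mem (𝒜.smul_mem (one_mem 𝒜) _) hx

lemma subalgebra_eq_top_of_closure_eq_top {S : Set SL(2, R)} (hS : Subgroup.closure S = ⊤)
    {𝒜 : Subalgebra R (Matrix (Fin 2) (Fin 2) R)} (h : ∀ g ∈ S, ↑ₘg ∈ 𝒜) : 𝒜 = ⊤ := by
  have single_mem_of_ne {i j : Fin 2} (hij : i ≠ j) : single i j 1 ∈ 𝒜 := by
    simpa [transvection_coe] using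
      sub_mem (coe_mem_of_closure_eq_top hS h (.transvection hij 1)) (one_mem 𝒜)
  have single_mem (i j : Fin 2) : single i j 1 ∈ 𝒜 := by
    by_cases hij : i = j
    · obtain ⟨k, hk⟩ := exists_ne j
      simpa [hij] using mul_mem (single_mem_of_ne hk.symm) (single_mem_of_ne hk)
    · exact single_mem_of_ne hij
  refine eq_top_iff.mpr fun M _ => ?_
  rw [matrix_eq_sum_single M]
  refine sum_mem fun i _ => sum_mem fun j _ => ?_
  simpa using 𝒜.smul_mem (single_mem i j) (M i j)

variable [IsDomain R]

lemma eq_zero_of_trace_mul_eq_zero_of_closure_eq_top {S : Set SL(2, R)}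
    (hS : Subgroup.closure S = ⊤) {N : Matrix (Fin 2) (Fin 2) R} (h_sq : N * N = 0)
    (h : ∀ g ∈ S, (N * ↑ₘg).trace = 0) : N = 0 := by
  by_contra hN
  have h_tr : N.trace = 0 := (isNilpotent_trace_of_isNilpotent ⟨2, by rwa [pow_two]⟩).eq_zero
  have trace_eq_zero_iff (M : Matrix (Fin 2) (Fin 2) R) : (N * M).trace = 0 ↔ N * M * N = 0 := by
    simp [mul_mul_self_eq_trace_smul h_sq h_tr, hN]
  let 𝒜 : Subalgebra R (Matrix (Fin 2) (Fin 2) R) :=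
    { carrier := {M | (N * M).trace = 0}
      algebraMap_mem' := fun r => by simp [Algebra.algebraMap_eq_smul_one, h_tr]
      add_mem' := fun {A B} (hA : _ = 0) (hB : _ = 0) => by simp [mul_add, hA, hB]
      mul_mem' := fun {A B} (hA : _ = 0) (hB : _ = 0) => by
        have hNA : N * A = A.trace • N - A * N := by
          simpa [h_tr, hA, eq_sub_iff_add_eq] using mul_add_mul_eq_of_fin_two N A
        rw [trace_eq_zero_iff] at hB
        refine (trace_eq_zero_iff _).mpr ?_
        calc N * (A * B) * N = N * A * B * N := by rw [← mul_assoc N A B]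
          _ = A.trace • (N * B * N) - A * (N * B * N) := by
            rw [hNA, sub_mul, sub_mul, smul_mul_assoc, smul_mul_assoc, mul_assoc A, mul_assoc A]
          _ = 0 := by rw [hB, smul_zero, mul_zero, sub_zero] }
  have h_top : 𝒜 = ⊤ := subalgebra_eq_top_of_closure_eq_top hS h
  refine hN (ext_iff_trace_mul_right.mpr fun M => ?_)
  have hM : M ∈ 𝒜 := h_top ▸ Algebra.mem_top
  rw [zero_mul, trace_zero]
  exact hM

end Generation

section Center

variable [IsDomain R]

lemma mem_center_of_smul_eq_smul_one {n : Type*} [DecidableEq n] [Fintype n] {c r : R} (hc : c ≠ 0)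
    {A : Matrix.SpecialLinearGroup n R} (h : c • A.1 = r • (1 : Matrix n n R)) :
    A ∈ Subgroup.center (Matrix.SpecialLinearGroup n R) := by
  refine Subgroup.mem_center_iff.mpr fun B => Subtype.ext (smul_right_injective _ hc ?_)
  calc c • (B.1 * A.1) = r • B.1 := by rw [← mul_smul_comm, h, mul_smul_comm, mul_one]
    _ = c • (A.1 * B.1) := by rw [← smul_mul_assoc, h, smul_mul_assoc, one_mul]

lemma mem_center_of_forall_commute_sq (h2 : (2 : R) ≠ 0) {n : Type*} [DecidableEq n] [Fintype n]
    {A : Matrix.SpecialLinearGroup n R}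
    (h : ∀ g : Matrix.SpecialLinearGroup n R, Commute (g ^ 2) A) :
    A ∈ Subgroup.center (Matrix.SpecialLinearGroup n R) := by
  have commute_single : Pairwise fun i j : n => Commute (single i j (1 : R)) A.1 := by
    intro i j hij
    have h_sq : (transvection hij (1 : R) ^ 2).1 = 1 + (2 : R) • single i j 1 := by
      rw [pow_two, ← transvection_add, one_add_one_eq_two, transvection_coe, smul_single,
        smul_eq_mul, mul_one]
    have h_comm : (1 + (2 : R) • single i j 1) * A.1 = A.1 * (1 + (2 : R) • single i j 1) := by
      rw [← h_sq]
      exact congr_arg Subtype.val (h (transvection hij 1)).eq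
    refine smul_right_injective _ h2 ?_
    simpa only [add_mul, mul_add, one_mul, mul_one, add_right_inj, smul_mul_assoc,
      mul_smul_comm] using h_comm
  obtain ⟨r, hr⟩ := mem_range_scalar_of_commute_single commute_single
  refine mem_center_of_smul_eq_smul_one (one_ne_zero (α := R)) (r := r) ?_
  rw [one_smul, ← hr, scalar_apply, smul_one_eq_diagonal]

lemma mem_center_of_two_mul_trace_mul_eq (h2 : (2 : R) ≠ 0) {S : Set SL(2, R)}
    (hS : Subgroup.closure S = ⊤) {A : SL(2, R)} (hA : (↑ₘA).trace ^ 2 = 4)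
    (h : ∀ g ∈ S, 2 * (↑ₘ(A * g)).trace = (↑ₘA).trace * (↑ₘg).trace) :
    A ∈ Subgroup.center SL(2, R) := by
  let N : Matrix (Fin 2) (Fin 2) R := (2 : R) • ↑ₘA - (↑ₘA).trace • 1
  have h_sq : N * N = 0 := by
    calc N * N = (4 : R) • (↑ₘA * ↑ₘA - (↑ₘA).trace • ↑ₘA) + (↑ₘA).trace ^ 2 • 1 := by
          simp only [N, sub_mul, mul_sub, smul_mul_assoc, mul_smul_comm, one_mul, mul_one]
          module
      _ = 0 := by
          rw [coe_mul_self_eq_trace_smul_sub_one, hA]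
          module
  have hN : N = 0 := by
    refine eq_zero_of_trace_mul_eq_zero_of_closure_eq_top hS h_sq fun g hg => ?_
    simpa [N, sub_mul, sub_eq_zero] using h g hg
  exact mem_center_of_smul_eq_smul_one h2 (sub_eq_zero.mp hN)

end Center

section Escape

variable [IsDomain R] {H : Set SL(2, R)}

lemma mem_center_or_trace_eq_zero (h2 : (2 : R) ≠ 0) (h3 : (3 : R) ≠ 0)
    (h_inv : ∀ h ∈ H, h⁻¹ ∈ H) (h_one : 1 ∈ H) (h_gen : Subgroup.closure H = ⊤)
    (h_roots : ∀ x ∈ H ^ 3, (↑ₘx).trace ^ 3 = 4 * (↑ₘx).trace) {A : SL(2, R)} (hA : A ∈ H) :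
    A ∈ Subgroup.center SL(2, R) ∨ (↑ₘA).trace = 0 := by
  have h_subset : H ⊆ H ^ 3 := Set.subset_pow h_one three_ne_zero
  refine (pow_three_eq_four_mul_iff.mp (h_roots A (h_subset hA))).symm.imp_left fun h_tr => ?_
  refine mem_center_of_two_mul_trace_mul_eq h2 h_gen h_tr fun B hB => ?_
  apply two_mul_eq_mul_of_cubic_roots h3 h_tr (h_roots B (h_subset hB))
    (h_roots _ (mul_mem_pow_three h_one hA hB))
  · rw [← trace_inv_mul]
    exact h_roots _ (mul_mem_pow_three h_one (h_inv A hA) hB)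
  · rw [← trace_mul_self_mul]
    exact h_roots _ (mul_mul_mem_pow_three hA hA hB)

lemma mul_mem_center_of_trace_mul_ne_zero (h2 : (2 : R) ≠ 0) (h5 : (5 : R) ≠ 0)
    (h_one : 1 ∈ H) (h_gen : Subgroup.closure H = ⊤)
    (h_roots : ∀ x ∈ H ^ 3, (↑ₘx).trace ^ 3 = 4 * (↑ₘx).trace)
    (h_central : ∀ C ∈ H, C ∈ Subgroup.center SL(2, R) ∨ (↑ₘC).trace = 0) {A B : SL(2, R)}
    (hA : A ∈ H) (hB : B ∈ H) (hA0 : (↑ₘA).trace = 0) (hB0 : (↑ₘB).trace = 0)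
    (hAB : (↑ₘ(A * B)).trace ≠ 0) : A * B ∈ Subgroup.center SL(2, R) := by
  have h_roots₂ {a b : SL(2, R)} (ha : a ∈ H) (hb : b ∈ H) :
      (↑ₘ(a * b)).trace ^ 3 = 4 * (↑ₘ(a * b)).trace :=
    h_roots _ (mul_mem_pow_three h_one ha hb)
  have hAB4 := (pow_three_eq_four_mul_iff.mp (h_roots₂ hA hB)).resolve_left hAB
  refine mem_center_of_two_mul_trace_mul_eq h2 h_gen hAB4 fun C hC => ?_
  rcases h_central C hC with hC_central | hC0
  · exact two_mul_trace_mul_of_mem_center (A * B) hC_central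
  · have h_fricke := trace_mul_mul_sq_of_trace_eq_zero hA0 hB0 hC0
    simp only [← coe_mul, det_coe] at h_fricke
    have h_zero : (↑ₘ(A * B * C)).trace = 0 := by
      refine eq_zero_of_sq_eq_neg_of_cubic_roots h2 h5 hAB4 (h_roots₂ hA hC) (h_roots₂ hB hC)
        (h_roots _ (mul_mul_mem_pow_three hA hB hC)) ?_
      linear_combination h_fricke - hAB4
    rw [h_zero, hC0, mul_zero, mul_zero]

end Escape

theorem stmt_12_general [IsDomain R] (h2 : (2 : R) ≠ 0) (h3 : (3 : R) ≠ 0) (h5 : (5 : R) ≠ 0)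
    (H : Set SL(2, R)) (h_inv : ∀ h ∈ H, h⁻¹ ∈ H) (h_one : 1 ∈ H)
    (h_gen : Subgroup.closure H = ⊤) :
    ∃ x ∈ H ^ 3, (↑ₘx).trace ≠ 0 ∧ (↑ₘx).trace ^ 2 ≠ 4 := by
  by_contra! h_trace
  have h_roots : ∀ x ∈ H ^ 3, (↑ₘx).trace ^ 3 = 4 * (↑ₘx).trace := fun x hx =>
    pow_three_eq_four_mul_iff.mpr (or_iff_not_imp_left.mpr (h_trace x hx))
  have h_central : ∀ A ∈ H, A ∈ Subgroup.center SL(2, R) ∨ (↑ₘA).trace = 0 :=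
    fun A hA => mem_center_or_trace_eq_zero h2 h3 h_inv h_one h_gen h_roots hA
  obtain ⟨A, hA, hA_central⟩ : ∃ A ∈ H, A ∉ Subgroup.center SL(2, R) := by
    by_contra! h_le
    have h_le_center := (Subgroup.closure_le _).mpr h_le
    have h_mem := h_le_center (h_gen ▸ Subgroup.mem_top (transvection zero_ne_one 1))
    exact one_ne_zero ((transvection_mem_center_iff _ _).mp h_mem)
  have hA0 := (h_central A hA).resolve_left hA_central
  refine hA_central (mem_center_of_forall_commute_sq h2 fun g => ?_)
  refine commute_sq_of_semiconjBy_self_or_neg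
    (semiconjBy_self_or_neg_of_mem_closure (S := H) (fun B hB => ?_) (h_gen ▸ Subgroup.mem_top g))
  rcases h_central B hB with hB_central | hB0
  · exact .inl (Subgroup.mem_center_iff.mp hB_central A).symm
  by_cases hAB : (↑ₘ(A * B)).trace = 0
  · exact .inr (semiconjBy_neg_of_trace_eq_zero hA0 hB0 hAB)
  · exact .inl (commute_of_mul_mem_center (mul_mem_center_of_trace_mul_ne_zero h2 h5 h_one h_gen
      h_roots h_central hA hB hA0 hB0 hAB)).symm

/-- **Escape from non-regular elements (Lemma `lm-escape`).** For a prime `p ≥ 7` and a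
symmetric generating set `H` of `SL₂(𝔽_p)` containing `1`, the product set `H^(3)` contains
a regular semisimple element of nonzero trace, i.e. some `x` with `tr(x) ≠ 0` and
`tr(x)² ≠ 4`. -/
theorem stmt_12 (p : ℕ) (hp : p.Prime) (hp7 : 7 ≤ p)
    (H : Finset (Matrix.SpecialLinearGroup (Fin 2) (ZMod p)))
    (hsym : ∀ h ∈ H, h⁻¹ ∈ H)
    (hone : (1 : Matrix.SpecialLinearGroup (Fin 2) (ZMod p)) ∈ H)
    (hgen : Subgroup.closure (H : Set (Matrix.SpecialLinearGroup (Fin 2) (ZMod p))) = ⊤) :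
    ∃ x ∈ (H ^ 3 : Finset (Matrix.SpecialLinearGroup (Fin 2) (ZMod p))),
      Matrix.trace (x : Matrix (Fin 2) (Fin 2) (ZMod p)) ≠ 0 ∧
      Matrix.trace (x : Matrix (Fin 2) (Fin 2) (ZMod p)) ^ 2 ≠ 4 := by
  have : Fact p.Prime := ⟨hp⟩
  have natCast_ne_zero {n : ℕ} (hn0 : n ≠ 0) (hnp : n < p) : (n : ZMod p) ≠ 0 := fun h =>
    hn0 (Nat.eq_zero_of_dvd_of_lt ((ZMod.natCast_eq_zero_iff n p).mp h) hnp)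
  have h2 : (2 : ZMod p) ≠ 0 := mod_cast natCast_ne_zero two_ne_zero (by lia)
  have h3 : (3 : ZMod p) ≠ 0 := mod_cast natCast_ne_zero three_ne_zero (by lia)
  have h5 : (5 : ZMod p) ≠ 0 := mod_cast natCast_ne_zero (n := 5) (by lia) (by lia)
  exact_mod_cast stmt_12_general h2 h3 h5 H hsym hone hgen
end

section
/- Let p ≥ 3 be a prime and let g ∈ SL₂(𝔽_p) satisfy tr(g) ≠ 0 and tr(g)² ≠ 4. Let H be a symmetric generating set of SL₂(𝔽_p) containing the identity. Then |{x ∈ H : tr(x) = tr(g)}|³ ≤ 343 · |H^(3)|², unless |H^(3)|^28 > |H|^29. (Equivalently, with α = |H^(3)|/|H| the tripling constant, |{x ∈ H : tr(x) = tr(g)}| ≤ 7·α^(2/3)·|H|^(2/3) unless α > |H|^(1/28). The set {x : tr(x) = tr(g)} is the intersection of H with the conjugacy class of g in SL₂ over the algebraic closure of 𝔽_p.) -/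
open Pointwise

/-!
The estimate is of Larsen–Pink type, and is obtained by counting triples of elements of `H` of
trace `t`.

Send `(y, y', y'')` to `(y⁻¹ y', y⁻¹ y'') = (a, b)`. Every `y` over a given `(a, b)` satisfies
`tr y = tr (y a) = tr (y b) = t`. If three of them lie over `(a, b)`, then either `y, y a, y b` are
collinear, or, because `t ≠ 0`, the three affine equations are independent and the `y`'s are
collinear. A line meeting the quadric `det = 1` in three points lies on it and has nilpotent
direction `N`; the image of `N` is then a point of the projective line fixed by `y`, `y a` and
`y b`. So at most `2 |H²|²` triples of distinct elements have no common fixed point.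

An element with `t² ≠ 4` fixes at most two points, and when it fixes the line of `u` its eigenvalue
on `u` is one of two values. If `S` is the set of elements of `H` with a given eigenvector `u` and
eigenvalue, and `h ∈ H` moves the line of `u`, then `(x₁, x₂, x₃) ↦ x₁ h x₂ h x₃` is injective on
`S³` once at most one value of `x₂` is removed, whence `|S|³ ≤ 2 |H⁵|`.

Writing `N` for the number of elements of trace `t` and `M` for the largest `|S|`, this gives
`N³ ≪ |H²|² + N M²`, so `N³ ≪ |H³|²` unless `N ≪ M`. In that case `N³ ≪ |H⁵|`, and
`|H⁵| |H|² ≤ |H³|³` yields `N³ ≪ |H³|²` when `|H³| ≤ N²`; otherwise `N³ ≤ N⁴ ≤ |H³|²`.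
-/

open Matrix MulAction
open scoped Finset MatrixGroups LinearAlgebra.Projectivization

variable {F : Type*} [Field F]

section AreaForm

variable (F) in
/-- The standard symplectic form on the plane: `areaForm F u v` is the determinant of the matrix
with columns `u` and `v`. -/
def areaForm : LinearMap.BilinForm F (Fin 2 → F) := Matrix.toBilin' !![0, 1; -1, 0]

lemma areaForm_apply (u v : Fin 2 → F) : areaForm F u v = u 0 * v 1 - u 1 * v 0 := by
  simp only [areaForm, Matrix.toBilin'_apply, Fin.sum_univ_two, of_apply, cons_val', cons_val_zero,
    cons_val_one, cons_val_fin_one]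
  ring

lemma areaForm_self (u : Fin 2 → F) : areaForm F u u = 0 := by
  rw [areaForm_apply]
  ring

lemma areaForm_eq_zero_iff {u v : Fin 2 → F} (hu : u ≠ 0) :
    areaForm F u v = 0 ↔ ∃ c : F, v = c • u := by
  constructor
  · intro h
    rw [areaForm_apply] at h
    by_cases h0 : u 0 = 0
    · have h1 : u 1 ≠ 0 := fun h1 ↦ hu (by ext i; fin_cases i <;> assumption)
      refine ⟨v 1 / u 1, funext (Fin.forall_fin_two.mpr ⟨?_, ?_⟩)⟩ <;>
        rw [Pi.smul_apply, smul_eq_mul, div_mul_eq_mul_div, eq_div_iff h1]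
      linear_combination -h
    · refine ⟨v 0 / u 0, funext (Fin.forall_fin_two.mpr ⟨?_, ?_⟩)⟩ <;>
        rw [Pi.smul_apply, smul_eq_mul, div_mul_eq_mul_div, eq_div_iff h0]
      linear_combination h
  · rintro ⟨c, rfl⟩
    rw [map_smul, areaForm_self, smul_zero]

lemma exists_areaForm_ne_zero {u : Fin 2 → F} (hu : u ≠ 0) : ∃ v, areaForm F u v ≠ 0 := by
  contrapose! hu
  ext i; fin_cases i
  · simpa [areaForm_apply] using hu ![0, 1]
  · simpa [areaForm_apply] using hu ![1, 0]

lemma areaForm_mulVec_mulVec (A : Matrix (Fin 2) (Fin 2) F) (u v : Fin 2 → F) :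
    areaForm F (A *ᵥ u) (A *ᵥ v) = A.det * areaForm F u v := by
  simp only [areaForm_apply, mulVec, dotProduct, Fin.sum_univ_two, det_fin_two]
  ring

lemma areaForm_mulVec_add_areaForm_mulVec (A : Matrix (Fin 2) (Fin 2) F) (u v : Fin 2 → F) :
    areaForm F (A *ᵥ u) v + areaForm F u (A *ᵥ v) = A.trace * areaForm F u v := by
  simp only [areaForm_apply, mulVec, dotProduct, Fin.sum_univ_two, trace_fin_two]
  ring

lemma smul_eq_coe_mulVec (x : SL(2, F)) (u : Fin 2 → F) :
    x • u = (x : Matrix (Fin 2) (Fin 2) F) *ᵥ u := by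
  rw [Matrix.SpecialLinearGroup.smul_def, smul_eq_mulVec]

lemma areaForm_smul_smul (x : SL(2, F)) (u v : Fin 2 → F) :
    areaForm F (x • u) (x • v) = areaForm F u v := by
  rw [smul_eq_coe_mulVec, smul_eq_coe_mulVec, areaForm_mulVec_mulVec, x.det_coe, one_mul]

lemma areaForm_smul_add_areaForm_smul (x : SL(2, F)) (u v : Fin 2 → F) :
    areaForm F (x • u) v + areaForm F u (x • v) = x.1.trace * areaForm F u v := by
  rw [smul_eq_coe_mulVec, smul_eq_coe_mulVec, areaForm_mulVec_add_areaForm_mulVec]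

lemma eq_of_smul_eq_of_areaForm_ne_zero {x y : SL(2, F)} {u w : Fin 2 → F}
    (huw : areaForm F u w ≠ 0) (hu : x • u = y • u) (hw : x • w = y • w) : x = y := by
  have hcols : IsUnit !![u 0, w 0; u 1, w 1] := by
    rw [Matrix.isUnit_iff_isUnit_det, det_fin_two_of, isUnit_iff_ne_zero]
    convert huw using 1
    rw [areaForm_apply]
    ring
  apply Subtype.ext
  apply hcols.mul_left_injective
  rw [smul_eq_coe_mulVec, smul_eq_coe_mulVec] at hu hw
  ext i j
  fin_cases j
  · simpa [mul_apply, mulVec, dotProduct, Fin.sum_univ_two] using congrFun hu i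
  · simpa [mul_apply, mulVec, dotProduct, Fin.sum_univ_two] using congrFun hw i

end AreaForm

section Eigenvectors

lemma areaForm_eq_zero_iff_mk_eq_mk {u v : Fin 2 → F} (hu : u ≠ 0) (hv : v ≠ 0) :
    areaForm F u v = 0 ↔ Projectivization.mk F v hv = Projectivization.mk F u hu := by
  rw [areaForm_eq_zero_iff hu, Projectivization.mk_eq_mk_iff']
  exact exists_congr fun _ ↦ eq_comm

lemma smul_mk_eq_mk_iff (x : SL(2, F)) {u : Fin 2 → F} (hu : u ≠ 0) :
    x • Projectivization.mk F u hu = Projectivization.mk F u hu ↔ ∃ l : F, x • u = l • u := by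
  rw [Projectivization.smul_mk, Projectivization.mk_eq_mk_iff']
  exact exists_congr fun _ ↦ eq_comm

lemma smul_mk_eq_mk_iff_areaForm (x : SL(2, F)) {u : Fin 2 → F} (hu : u ≠ 0) :
    x • Projectivization.mk F u hu = Projectivization.mk F u hu ↔ areaForm F u (x • u) = 0 := by
  rw [smul_mk_eq_mk_iff, areaForm_eq_zero_iff hu]

lemma mul_areaForm_smul {x : SL(2, F)} {u : Fin 2 → F} {l : F} (hx : x • u = l • u)
    (w : Fin 2 → F) : l * areaForm F u (x • w) = areaForm F u w := by
  rw [← areaForm_smul_smul x u w, hx, LinearMap.map_smul₂, smul_eq_mul]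

lemma eigenvalue_sq_add_one {x : SL(2, F)} {u : Fin 2 → F} {l : F} (hu : u ≠ 0)
    (hx : x • u = l • u) : l * l + 1 = x.1.trace * l := by
  obtain ⟨w, hw⟩ := exists_areaForm_ne_zero hu
  apply mul_right_cancel₀ hw
  have htrace := areaForm_smul_add_areaForm_smul x u w
  rw [hx, LinearMap.map_smul₂, smul_eq_mul] at htrace
  linear_combination l * htrace - mul_areaForm_smul hx w

lemma eigenvalue_ne_zero {x : SL(2, F)} {u : Fin 2 → F} {l : F} (hu : u ≠ 0) (hx : x • u = l • u) :
    l ≠ 0 := by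
  rintro rfl
  simpa using eigenvalue_sq_add_one hu hx

lemma eigenvalue_mul_eq_one {x : SL(2, F)} {u v : Fin 2 → F} {l m : F}
    (huv : areaForm F u v ≠ 0) (hu : x • u = l • u) (hv : x • v = m • v) : l * m = 1 := by
  have h := mul_areaForm_smul hu v
  rw [hv, map_smul, smul_eq_mul, ← mul_assoc] at h
  exact (mul_eq_right₀ huv).mp h

lemma trace_sq_eq_four_of_fixes_three {x : SL(2, F)} {P Q R : ℙ F (Fin 2 → F)} (hPQ : P ≠ Q)
    (hPR : P ≠ R) (hQR : Q ≠ R) (hP : x • P = P) (hQ : x • Q = Q) (hR : x • R = R) :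
    x.1.trace ^ 2 = 4 := by
  induction P with | h u hu
  induction Q with | h v hv
  induction R with | h w hw
  rw [ne_comm, ne_eq, ← areaForm_eq_zero_iff_mk_eq_mk] at hPQ hPR hQR
  obtain ⟨l, hl⟩ := (smul_mk_eq_mk_iff x hu).mp hP
  obtain ⟨m, hm⟩ := (smul_mk_eq_mk_iff x hv).mp hQ
  obtain ⟨n, hn⟩ := (smul_mk_eq_mk_iff x hw).mp hR
  have hlm : l * m = 1 := eigenvalue_mul_eq_one hPQ hl hm
  have hln : l * n = 1 := eigenvalue_mul_eq_one hPR hl hn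
  have hmn : m * n = 1 := eigenvalue_mul_eq_one hQR hm hn
  have htrace : l + m = x.1.trace := by
    apply mul_right_cancel₀ hPQ
    rw [← areaForm_smul_add_areaForm_smul x u v, hl, hm, LinearMap.map_smul₂, map_smul,
      smul_eq_mul, smul_eq_mul, add_mul]
  have hl_eq : l = m := mul_right_cancel₀ (right_ne_zero_of_mul_eq_one hln) (hln.trans hmn.symm)
  rw [← htrace, hl_eq]
  linear_combination 4 * m * hl_eq.symm + 4 * hlm

lemma exists_eq_or_eq_of_smul_eq_of_trace_sq_ne_four {x : SL(2, F)} (hx : x.1.trace ^ 2 ≠ 4) :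
    ∃ P Q : ℙ F (Fin 2 → F), ∀ R, x • R = R → R = P ∨ R = Q := by
  by_contra! hmany
  obtain ⟨P₀⟩ : Nonempty (ℙ F (Fin 2 → F)) := inferInstance
  obtain ⟨P, hP, -⟩ := hmany P₀ P₀
  obtain ⟨Q, hQ, hQP, -⟩ := hmany P P
  obtain ⟨R, hR, hRP, hRQ⟩ := hmany P Q
  exact hx (trace_sq_eq_four_of_fixes_three hQP.symm hRP.symm hRQ.symm hP hQ hR)

lemma eq_of_areaForm_smul_eq {x y h : SL(2, F)} {u : Fin 2 → F} {l : F}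
    (hh : areaForm F u (h • u) ≠ 0) (hx : x • u = l • u) (hy : y • u = l • u)
    (hxy : areaForm F u ((h * x * h) • u) = areaForm F u ((h * y * h) • u)) : x = y := by
  have hu : u ≠ 0 := by
    rintro rfl
    simp at hh
  have hzero : areaForm F u (x • h • u - y • h • u) = 0 := by
    apply mul_left_cancel₀ (eigenvalue_ne_zero hu hx)
    rw [map_sub, mul_sub, mul_areaForm_smul hx, mul_areaForm_smul hy, sub_self, mul_zero]
  obtain ⟨s, hs⟩ := (areaForm_eq_zero_iff hu).mp hzero
  have hs0 : s = 0 := by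
    apply (mul_eq_zero_iff_right hh).mp
    rw [← smul_eq_mul, ← map_smul, ← smul_comm h, ← hs, smul_sub, map_sub, sub_eq_zero]
    simpa only [mul_smul] using hxy
  rw [hs0, zero_smul, sub_eq_zero] at hs
  exact eq_of_smul_eq_of_areaForm_ne_zero hh (hx.trans hy.symm) hs

lemma eq_of_mul_mul_mul_mul_eq {x₁ x₂ x₃ y₁ y₂ y₃ h : SL(2, F)} {u : Fin 2 → F} {l : F}
    (hh : areaForm F u (h • u) ≠ 0) (hx₁ : x₁ • u = l • u) (hx₂ : x₂ • u = l • u)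
    (hx₃ : x₃ • u = l • u) (hy₁ : y₁ • u = l • u) (hy₂ : y₂ • u = l • u) (hy₃ : y₃ • u = l • u)
    (hmove : areaForm F u ((h * x₂ * h) • u) ≠ 0)
    (hxy : x₁ * (h * x₂ * h) * x₃ = y₁ * (h * y₂ * h) * y₃) : x₁ = y₁ ∧ x₂ = y₂ ∧ x₃ = y₃ := by
  have hl : l ≠ 0 := by
    refine eigenvalue_ne_zero (u := u) ?_ hx₁
    rintro rfl
    simp at hh
  have hsmul : x₁ • (h * x₂ * h) • u = y₁ • (h * y₂ * h) • u := by
    have hxyu := congrArg (· • u) hxy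
    simp only [mul_smul _ x₃, mul_smul _ y₃, hx₃, hy₃, smul_comm (_ : SL(2, F)) l,
      smul_right_inj hl] at hxyu
    simpa only [mul_smul] using hxyu
  obtain rfl : x₂ = y₂ := by
    apply eq_of_areaForm_smul_eq hh hx₂ hy₂
    rw [← mul_areaForm_smul hx₁, hsmul, mul_areaForm_smul hy₁]
  obtain rfl : x₁ = y₁ := eq_of_smul_eq_of_areaForm_ne_zero hmove (hx₁.trans hy₁.symm) hsmul
  exact ⟨rfl, rfl, mul_left_cancel hxy⟩

end Eigenvectors

section EigenCount

variable [DecidableEq F]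

/-- The elements of `H` having `u` as an eigenvector with eigenvalue `l`. -/
def eigenFinset (H : Finset SL(2, F)) (u : Fin 2 → F) (l : F) : Finset SL(2, F) :=
  {x ∈ H | x • u = l • u}

variable {H : Finset SL(2, F)} {u : Fin 2 → F} {l : F} {h : SL(2, F)}

lemma mem_eigenFinset {x : SL(2, F)} : x ∈ eigenFinset H u l ↔ x ∈ H ∧ x • u = l • u :=
  Finset.mem_filter

lemma card_eigenFinset_le_card_filter_add_one (hh : areaForm F u (h • u) ≠ 0) :
    #(eigenFinset H u l) ≤
      #{x ∈ eigenFinset H u l | areaForm F u ((h * x * h) • u) ≠ 0} + 1 := by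
  rw [← Finset.card_filter_add_card_filter_not (fun x ↦ areaForm F u ((h * x * h) • u) ≠ 0)]
  refine Nat.add_le_add_left (Finset.card_le_one.mpr fun x hx y hy ↦ ?_) _
  rw [Finset.mem_filter, mem_eigenFinset, not_not] at hx hy
  exact eq_of_areaForm_smul_eq hh hx.1.2 hy.1.2 (hx.2.trans hy.2.symm)

lemma card_eigenFinset_sq_mul_card_filter_le (hhH : h ∈ H) (hh : areaForm F u (h • u) ≠ 0) :
    #(eigenFinset H u l) ^ 2 *
      #{x ∈ eigenFinset H u l | areaForm F u ((h * x * h) • u) ≠ 0} ≤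
        #(H ^ 5) := by
  set S := eigenFinset H u l with hS
  set S' : Finset SL(2, F) := {x ∈ S | areaForm F u ((h * x * h) • u) ≠ 0} with hS'
  have hSH : S ⊆ H := Finset.filter_subset _ _
  have hcard : #S ^ 2 * #S' = #(S ×ˢ S' ×ˢ S) := by
    rw [Finset.card_product, Finset.card_product]
    ring
  rw [hcard]
  refine Finset.card_le_card_of_injOn (fun x ↦ x.1 * (h * x.2.1 * h) * x.2.2) ?_ ?_
  · rintro ⟨x₁, x₂, x₃⟩ hx
    simp only [Finset.coe_product, Set.mem_prod, Finset.mem_coe] at hx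
    have hpow : H ^ 5 = H * (H * H * H) * H := by
      simp only [pow_succ, pow_zero, one_mul, mul_assoc]
    rw [hpow]
    exact Finset.mul_mem_mul (Finset.mul_mem_mul (hSH hx.1) (Finset.mul_mem_mul
      (Finset.mul_mem_mul hhH (hSH (Finset.filter_subset _ _ hx.2.1))) hhH)) (hSH hx.2.2)
  · rintro ⟨x₁, x₂, x₃⟩ hx ⟨y₁, y₂, y₃⟩ hy hxy
    simp only [Finset.coe_product, Set.mem_prod, Finset.mem_coe, hS', hS, Finset.mem_filter,
      mem_eigenFinset] at hx hy
    obtain ⟨rfl, rfl, rfl⟩ := eq_of_mul_mul_mul_mul_eq hh hx.1.2 hx.2.1.1.2 hx.2.2.2 hy.1.2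
      hy.2.1.1.2 hy.2.2.2 hx.2.1.2 hxy
    rfl

lemma card_eigenFinset_pow_three_le (hu : u ≠ 0)
    (hirr : ∃ h ∈ H, h • Projectivization.mk F u hu ≠ Projectivization.mk F u hu) :
    #(eigenFinset H u l) ^ 3 ≤ 2 * #(H ^ 5) := by
  obtain ⟨h, hhH, hh⟩ := hirr
  rw [ne_eq, smul_mk_eq_mk_iff_areaForm] at hh
  have hsq := card_eigenFinset_sq_mul_card_filter_le (l := l) hhH hh
  have hle := card_eigenFinset_le_card_filter_add_one (H := H) (l := l) hh
  have hpos : 0 < #(H ^ 5) := (Finset.Nonempty.pow ⟨h, hhH⟩).card_pos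
  generalize #(eigenFinset H u l) = n at hsq hle ⊢
  generalize
    #{x ∈ eigenFinset H u l | areaForm F u ((h * x * h) • u) ≠ 0} = m at hsq hle
  rcases Nat.eq_zero_or_pos m with rfl | hm
  · have : n ^ 3 ≤ 1 := Nat.pow_le_one_iff (by norm_num) |>.mpr (by omega)
    omega
  · calc n ^ 3 = n ^ 2 * n := pow_succ n 2
      _ ≤ n ^ 2 * (2 * m) := Nat.mul_le_mul_left _ (by omega)
      _ = 2 * (n ^ 2 * m) := by ring
      _ ≤ 2 * #(H ^ 5) := Nat.mul_le_mul_left _ hsq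

end EigenCount

section CommonFixedPoints

/-- `x`, `y` and `z` fix a common point of the projective line, that is, lie in a common Borel
subgroup. -/
def HaveCommonFixedPoint (x y z : SL(2, F)) : Prop :=
  ∃ P : ℙ F (Fin 2 → F), x • P = P ∧ y • P = P ∧ z • P = P

variable [DecidableEq F]

/-- The elements of `H` with trace `t`. -/
def traceFinset (H : Finset SL(2, F)) (t : F) : Finset SL(2, F) := {x ∈ H | x.1.trace = t}

variable {H : Finset SL(2, F)} {t : F} {M : ℕ}

lemma mem_traceFinset {x : SL(2, F)} : x ∈ traceFinset H t ↔ x ∈ H ∧ x.1.trace = t :=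
  Finset.mem_filter

open scoped Classical in
lemma card_filter_smul_eq_self_le (hM : ∀ u ≠ 0, ∀ l, #(eigenFinset H u l) ≤ M)
    (P : ℙ F (Fin 2 → F)) : #{x ∈ traceFinset H t | x • P = P} ≤ 2 * M := by
  induction P with | h u hu
  obtain hempty | ⟨y, hy⟩ := Finset.eq_empty_or_nonempty
    {x ∈ traceFinset H t | x • Projectivization.mk F u hu = Projectivization.mk F u hu}
  · rw [hempty, Finset.card_empty]
    exact Nat.zero_le _
  simp only [Finset.mem_filter, mem_traceFinset, smul_mk_eq_mk_iff] at hy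
  obtain ⟨⟨-, hty⟩, m, hm⟩ := hy
  have hsub : {x ∈ traceFinset H t | x • Projectivization.mk F u hu = Projectivization.mk F u hu} ⊆
      eigenFinset H u m ∪ eigenFinset H u (t - m) := by
    intro x hx
    simp only [Finset.mem_filter, mem_traceFinset, smul_mk_eq_mk_iff] at hx
    obtain ⟨⟨hxH, htx⟩, l, hl⟩ := hx
    have hquad : (l - m) * (l - (t - m)) = 0 := by
      have hlt := eigenvalue_sq_add_one hu hl
      have hmt := eigenvalue_sq_add_one hu hm
      rw [htx] at hlt
      rw [hty] at hmt
      linear_combination hlt - hmt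
    rw [Finset.mem_union, mem_eigenFinset, mem_eigenFinset]
    rcases mul_eq_zero.mp hquad with h | h <;> rw [sub_eq_zero] at h
    · exact .inl ⟨hxH, h ▸ hl⟩
    · exact .inr ⟨hxH, h ▸ hl⟩
  calc _ ≤ _ := Finset.card_le_card hsub
    _ ≤ _ := Finset.card_union_le _ _
    _ ≤ M + M := add_le_add (hM u hu _) (hM u hu _)
    _ = 2 * M := (two_mul M).symm

open scoped Classical in
lemma card_filter_haveCommonFixedPoint_le (hM : ∀ u ≠ 0, ∀ l, #(eigenFinset H u l) ≤ M)
    {y : SL(2, F)} (hy : y.1.trace ^ 2 ≠ 4) :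
    #{z ∈ traceFinset H t ×ˢ traceFinset H t | HaveCommonFixedPoint y z.1 z.2} ≤ 8 * M ^ 2 := by
  obtain ⟨P, Q, hPQ⟩ := exists_eq_or_eq_of_smul_eq_of_trace_sq_ne_four hy
  let fixing (R : ℙ F (Fin 2 → F)) : Finset SL(2, F) := {x ∈ traceFinset H t | x • R = R}
  have hsub : {z ∈ traceFinset H t ×ˢ traceFinset H t | HaveCommonFixedPoint y z.1 z.2} ⊆
      fixing P ×ˢ fixing P ∪ fixing Q ×ˢ fixing Q := by
    rintro ⟨a, b⟩ hab
    simp only [Finset.mem_filter, Finset.mem_product] at hab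
    obtain ⟨⟨ha, hb⟩, R, hyR, haR, hbR⟩ := hab
    simp only [fixing, Finset.mem_union, Finset.mem_product, Finset.mem_filter]
    rcases hPQ R hyR with rfl | rfl
    · exact .inl ⟨⟨ha, haR⟩, hb, hbR⟩
    · exact .inr ⟨⟨ha, haR⟩, hb, hbR⟩
  calc _ ≤ _ := Finset.card_le_card hsub
    _ ≤ _ := Finset.card_union_le _ _
    _ ≤ (2 * M) * (2 * M) + (2 * M) * (2 * M) := by
      simp only [Finset.card_product]
      gcongr <;> exact card_filter_smul_eq_self_le hM _
    _ = 8 * M ^ 2 := by ring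

open scoped Classical in
lemma card_filter_haveCommonFixedPoint_triple_le (hM : ∀ u ≠ 0, ∀ l, #(eigenFinset H u l) ≤ M)
    (ht : t ^ 2 ≠ 4) :
    #{z ∈ traceFinset H t ×ˢ traceFinset H t ×ˢ traceFinset H t |
      HaveCommonFixedPoint z.1 z.2.1 z.2.2} ≤ #(traceFinset H t) * (8 * M ^ 2) := by
  rw [Finset.card_filter, Finset.sum_product, ← smul_eq_mul]
  refine Finset.sum_le_card_nsmul _ _ _ fun y hy ↦ ?_
  rw [← Finset.card_filter]
  exact card_filter_haveCommonFixedPoint_le hM ((mem_traceFinset.mp hy).2 ▸ ht)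

end CommonFixedPoints

section Collinear

lemma trace_mul_self_fin_two (A : Matrix (Fin 2) (Fin 2) F) :
    (A * A).trace = A.trace ^ 2 - 2 * A.det := by
  simp only [trace_fin_two, det_fin_two, mul_apply, Fin.sum_univ_two]
  ring

lemma det_add_smul_fin_two (A N : Matrix (Fin 2) (Fin 2) F) (s : F) :
    (A + s • N).det = A.det + s * (A.trace * N.trace - (A * N).trace) + s ^ 2 * N.det := by
  simp only [trace_fin_two, det_fin_two, mul_apply, Fin.sum_univ_two, Matrix.add_apply,
    Matrix.smul_apply, smul_eq_mul]
  ring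

-- The determinant is constant along the line at the parameters `0`, `1` and `c`, and it is
-- quadratic in the parameter, so its linear and quadratic coefficients vanish.
lemma det_eq_zero_and_trace_mul_eq_zero {A N : Matrix (Fin 2) (Fin 2) F} {c : F} (hc0 : c ≠ 0)
    (hc1 : c ≠ 1) (htr : N.trace = 0) (h1 : (A + N).det = A.det) (hc : (A + c • N).det = A.det) :
    N.det = 0 ∧ (A * N).trace = 0 := by
  have h1' := det_add_smul_fin_two A N 1
  rw [one_smul, h1, htr] at h1'
  rw [det_add_smul_fin_two A N c, htr] at hc
  have hdet : N.det = 0 := by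
    apply (mul_eq_zero_iff_left (mul_ne_zero hc0 (sub_ne_zero.mpr hc1))).mp
    linear_combination c * h1' + hc
  refine ⟨hdet, ?_⟩
  linear_combination h1' + hdet

lemma smul_mk_mulVec_eq_of_trace_eq_zero {N : Matrix (Fin 2) (Fin 2) F} (htr : N.trace = 0)
    (hdet : N.det = 0) {w : Fin 2 → F} (hw : N *ᵥ w ≠ 0) {x : SL(2, F)}
    (hx : (x.1 * N).trace = 0) :
    x • Projectivization.mk F (N *ᵥ w) hw = Projectivization.mk F (N *ᵥ w) hw := by
  have hNN : N *ᵥ N *ᵥ w = 0 := by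
    by_contra hne
    obtain ⟨v, hv⟩ := exists_areaForm_ne_zero hne
    apply hv
    rw [eq_neg_of_add_eq_zero_left ((areaForm_mulVec_add_areaForm_mulVec N (N *ᵥ w) v).trans
      (by rw [htr, zero_mul])), areaForm_mulVec_mulVec, hdet, zero_mul, neg_zero]
  have harea := areaForm_mulVec_add_areaForm_mulVec (x.1 * N) (N *ᵥ w) w
  rw [hx, zero_mul, ← mulVec_mulVec, hNN, mulVec_zero, map_zero, LinearMap.zero_apply, zero_add,
    ← mulVec_mulVec, ← smul_eq_coe_mulVec] at harea
  exact (smul_mk_eq_mk_iff_areaForm x hw).mpr harea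

lemma exists_smul_eq_of_nilpotent {N : Matrix (Fin 2) (Fin 2) F} (hN : N ≠ 0)
    (htr : N.trace = 0) (hdet : N.det = 0) :
    ∃ P : ℙ F (Fin 2 → F), ∀ x : SL(2, F), (x.1 * N).trace = 0 → x • P = P := by
  obtain ⟨w, hw⟩ : ∃ w, N *ᵥ w ≠ 0 := by
    contrapose! hN
    exact ext_of_mulVec_single fun i ↦ by rw [hN, zero_mulVec]
  exact ⟨_, fun x hx ↦ smul_mk_mulVec_eq_of_trace_eq_zero htr hdet hw hx⟩

lemma exists_smul_eq_of_collinear {x y z : SL(2, F)} (hxy : x ≠ y) (hxz : x ≠ z) (hyz : y ≠ z)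
    (hcol : Collinear F {x.1, y.1, z.1}) (htrace : x.1.trace = y.1.trace) :
    ∃ P : ℙ F (Fin 2 → F), (x • P = P ∧ y • P = P ∧ z • P = P) ∧
      ∀ g : SL(2, F), (x * g).1.trace = (y * g).1.trace → g • P = P := by
  obtain ⟨c, hz⟩ : ∃ c : F, x.1 + c • (y.1 - x.1) = z.1 := by
    have hmem := hcol.mem_affineSpan_of_mem_of_ne (p₁ := x.1) (p₂ := y.1) (p₃ := z.1)
      (by simp) (by simp) (by simp) (Subtype.coe_injective.ne hxy)
    obtain ⟨c, hc⟩ := mem_affineSpan_pair_iff_exists_lineMap_eq.mp hmem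
    exact ⟨c, by rw [← hc, AffineMap.lineMap_apply_module', add_comm]⟩
  have hy : x.1 + (y.1 - x.1) = y.1 := add_sub_cancel _ _
  have hN : y.1 - x.1 ≠ 0 := sub_ne_zero.mpr (Subtype.coe_injective.ne hxy.symm)
  generalize y.1 - x.1 = N at hy hz hN
  have htr : N.trace = 0 := by
    rwa [← hy, trace_add, left_eq_add] at htrace
  obtain ⟨hdet, hxN⟩ := det_eq_zero_and_trace_mul_eq_zero (A := x.1) (c := c)
    (by rintro rfl; exact hxz (Subtype.ext (by simpa using hz)))
    (by rintro rfl; exact hyz (Subtype.ext (by rw [← hy, ← hz, one_smul])))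
    htr (by rw [hy, x.det_coe, y.det_coe]) (by rw [hz, x.det_coe, z.det_coe])
  have hNN : (N * N).trace = 0 := by
    rw [trace_mul_self_fin_two, htr, hdet]
    ring
  obtain ⟨P, hP⟩ := exists_smul_eq_of_nilpotent hN htr hdet
  refine ⟨P, ⟨hP x hxN, hP y ?_, hP z ?_⟩, fun g hg ↦ hP g ?_⟩
  · rw [← hy, add_mul, trace_add, hxN, hNN, add_zero]
  · rw [← hz, add_mul, trace_add, hxN, smul_mul, trace_smul, hNN, smul_zero, add_zero]
  · rwa [Matrix.SpecialLinearGroup.coe_mul, Matrix.SpecialLinearGroup.coe_mul, ← hy,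
      add_mul, trace_add, left_eq_add, trace_mul_comm] at hg

end Collinear

section Duality

lemma linearIndependent_of_affineIndependent {ι V : Type*} [AddCommGroup V] [Module F V]
    {p : ι → V} (hp : AffineIndependent F p) (f : Module.Dual F V) {c : F} (hc : c ≠ 0)
    (hf : ∀ i, f (p i) = c) : LinearIndependent F p := by
  rw [linearIndependent_iff']
  intro s w hw
  refine hp.eq_zero_of_sum_eq_zero ?_ hw
  have hfw := congrArg f hw
  simp only [map_sum, map_smul, hf, map_zero, smul_eq_mul, ← Finset.sum_mul] at hfw
  exact (mul_eq_zero_iff_right hc).mp hfw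

lemma collinear_of_linearIndependent_dual {ι V : Type*} [Fintype ι] [AddCommGroup V] [Module F V]
    [FiniteDimensional F V] {f : ι → Module.Dual F V} (hf : LinearIndependent F f)
    (hι : Fintype.card ι + 1 = Module.finrank F V) {s : Set V} {c : ι → F}
    (hs : ∀ i, ∀ v ∈ s, f i v = c i) : Collinear F s := by
  have hle : vectorSpan F s ≤ (Submodule.span F (Set.range f)).dualCoannihilator := by
    rw [vectorSpan, Submodule.span_le]
    rintro _ ⟨v, hv, w, hw, rfl⟩
    rw [Submodule.coe_dualCoannihilator_span]
    rintro _ ⟨i, rfl⟩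
    change f i (v - w) = 0
    rw [map_sub, hs i v hv, hs i w hw, sub_self]
  have hcoann := Subspace.finrank_add_finrank_dualCoannihilator_eq (Submodule.span F (Set.range f))
  rw [finrank_span_eq_card hf] at hcoann
  rw [collinear_iff_finrank_le_one]
  exact (Submodule.finrank_mono hle).trans (by omega)

variable {n : Type*} [Fintype n]

variable (n F) in
/-- The trace pairing `A ↦ (X ↦ tr (A * X))` on square matrices. -/
def traceDual : Matrix n n F →ₗ[F] Module.Dual F (Matrix n n F) :=
  (LinearMap.mul F (Matrix n n F)).compr₂ (traceLinearMap n F F)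

lemma traceDual_apply (A X : Matrix n n F) : traceDual F n A X = (A * X).trace := rfl

lemma traceDual_injective : Function.Injective (traceDual F n) := fun _ _ hAB ↦
  ext_iff_trace_mul_right.mpr fun X ↦ LinearMap.congr_fun hAB X

end Duality

section Fiber

variable {t : F}

lemma collinear_of_not_collinear {A B Y : Matrix (Fin 2) (Fin 2) F} (ht : t ≠ 0)
    (hcol : ¬ Collinear F {Y, Y * A, Y * B}) (hY : Y.trace = t) (hYA : (Y * A).trace = t)
    (hYB : (Y * B).trace = t) {s : Set (Matrix (Fin 2) (Fin 2) F)}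
    (hs : ∀ X ∈ s, X.trace = t ∧ (X * A).trace = t ∧ (X * B).trace = t) : Collinear F s := by
  have hlin : LinearIndependent F ![Y, Y * A, Y * B] := by
    refine linearIndependent_of_affineIndependent (affineIndependent_iff_not_collinear_set.mpr hcol)
      (traceLinearMap (Fin 2) F F) ht fun i ↦ ?_
    fin_cases i <;> assumption
  have hone : LinearIndependent F ![1, A, B] := by
    have hmul : LinearMap.mulLeft F Y ∘ ![1, A, B] = ![Y, Y * A, Y * B] := by
      ext i : 1
      fin_cases i <;> simp
    exact LinearIndependent.of_comp _ (hmul ▸ hlin)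
  have hdual : LinearIndependent F (traceDual F (Fin 2) ∘ ![1, A, B]) :=
    hone.map' _ (LinearMap.ker_eq_bot.mpr traceDual_injective)
  refine collinear_of_linearIndependent_dual hdual (by simp [Module.finrank_matrix])
    (c := fun _ ↦ t) fun i X hX ↦ ?_
  obtain ⟨hXt, hXA, hXB⟩ := hs X hX
  rw [trace_mul_comm] at hXA hXB
  fin_cases i <;> simpa [traceDual_apply]

lemma haveCommonFixedPoint_of_three_translates {y₀ y₁ y₂ a b : SL(2, F)} (ht : t ≠ 0)
    (h₀₁ : y₀ ≠ y₁) (h₀₂ : y₀ ≠ y₂) (h₁₂ : y₁ ≠ y₂) (ha : a ≠ 1) (hb : b ≠ 1) (hab : a ≠ b)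
    (hy : ∀ y ∈ ({y₀, y₁, y₂} : Set SL(2, F)),
      y.1.trace = t ∧ (y * a).1.trace = t ∧ (y * b).1.trace = t) :
    HaveCommonFixedPoint y₀ (y₀ * a) (y₀ * b) := by
  obtain ⟨hy₀, hy₀a, hy₀b⟩ := hy y₀ (by simp)
  by_cases hcol : Collinear F {y₀.1, (y₀ * a).1, (y₀ * b).1}
  · obtain ⟨P, hP, -⟩ := exists_smul_eq_of_collinear (by simpa [eq_comm]) (by simpa [eq_comm])
      (by simpa) hcol (hy₀.trans hy₀a.symm)
    exact ⟨P, hP⟩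
  · obtain ⟨hy₁, hy₁a, hy₁b⟩ := hy y₁ (by simp)
    have hcol' : Collinear F {y₀.1, y₁.1, y₂.1} := by
      refine collinear_of_not_collinear ht hcol hy₀ hy₀a hy₀b ?_
      simpa using hy
    obtain ⟨P, ⟨hP, -, -⟩, hfix⟩ :=
      exists_smul_eq_of_collinear h₀₁ h₀₂ h₁₂ hcol' (hy₀.trans hy₁.symm)
    refine ⟨P, hP, ?_, ?_⟩
    · rw [mul_smul, hfix a (hy₀a.trans hy₁a.symm), hP]
    · rw [mul_smul, hfix b (hy₀b.trans hy₁b.symm), hP]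

lemma card_le_two_of_not_haveCommonFixedPoint {a b : SL(2, F)} (ht : t ≠ 0) (ha : a ≠ 1)
    (hb : b ≠ 1) (hab : a ≠ b) {Y : Finset SL(2, F)}
    (htrace : ∀ y ∈ Y, y.1.trace = t ∧ (y * a).1.trace = t ∧ (y * b).1.trace = t)
    (hY : ∀ y ∈ Y, ¬ HaveCommonFixedPoint y (y * a) (y * b)) : #Y ≤ 2 := by
  by_contra! hcard
  obtain ⟨y₀, hy₀, y₁, hy₁, y₂, hy₂, h₀₁, h₀₂, h₁₂⟩ := Finset.two_lt_card.mp hcard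
  refine hY y₀ hy₀ (haveCommonFixedPoint_of_three_translates ht h₀₁ h₀₂ h₁₂ ha hb hab ?_)
  rintro _ (rfl | rfl | rfl)
  exacts [htrace _ hy₀, htrace _ hy₁, htrace _ hy₂]

end Fiber

section TripleCount

lemma card_filter_not_pairwise_ne_le {α : Type*} [DecidableEq α] (s : Finset α) :
    #{z ∈ s ×ˢ s ×ˢ s | ¬ (z.1 ≠ z.2.1 ∧ z.1 ≠ z.2.2 ∧ z.2.1 ≠ z.2.2)} ≤ 3 * #s ^ 2 := by
  have hsub : {z ∈ s ×ˢ s ×ˢ s | ¬ (z.1 ≠ z.2.1 ∧ z.1 ≠ z.2.2 ∧ z.2.1 ≠ z.2.2)} ⊆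
      (s ×ˢ s).image (fun z ↦ (z.1, z.1, z.2)) ∪ ((s ×ˢ s).image (fun z ↦ (z.1, z.2, z.1)) ∪
        (s ×ˢ s).image (fun z ↦ (z.1, z.2, z.2))) := by
    rintro ⟨a, b, c⟩ h
    simp only [Finset.mem_filter, Finset.mem_product, Finset.mem_union, Finset.mem_image,
      Prod.exists, Prod.mk.injEq] at h ⊢
    grind
  calc _ ≤ _ := Finset.card_le_card hsub
    _ ≤ _ := (Finset.card_union_le _ _).trans (Nat.add_le_add_left (Finset.card_union_le _ _) _)
    _ ≤ #(s ×ˢ s) + (#(s ×ˢ s) + #(s ×ˢ s)) := by gcongr <;> exact Finset.card_image_le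
    _ = 3 * #s ^ 2 := by
      rw [Finset.card_product]
      ring

variable [DecidableEq F] {H : Finset SL(2, F)} {t : F} {M : ℕ}

open scoped Classical in
lemma card_filter_not_haveCommonFixedPoint_le (hH : H⁻¹ = H) (ht : t ≠ 0) :
    #{z ∈ traceFinset H t ×ˢ traceFinset H t ×ˢ traceFinset H t |
      (z.1 ≠ z.2.1 ∧ z.1 ≠ z.2.2 ∧ z.2.1 ≠ z.2.2) ∧ ¬ HaveCommonFixedPoint z.1 z.2.1 z.2.2} ≤
        2 * #(H ^ 2) ^ 2 := by
  set T := {z ∈ traceFinset H t ×ˢ traceFinset H t ×ˢ traceFinset H t |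
      (z.1 ≠ z.2.1 ∧ z.1 ≠ z.2.2 ∧ z.2.1 ≠ z.2.2) ∧ ¬ HaveCommonFixedPoint z.1 z.2.1 z.2.2}
  have hmaps : ∀ z ∈ T, (z.1⁻¹ * z.2.1, z.1⁻¹ * z.2.2) ∈ (H ^ 2) ×ˢ (H ^ 2) := by
    rintro ⟨y, a, b⟩ hz
    simp only [T, Finset.mem_filter, Finset.mem_product, mem_traceFinset] at hz
    have hy : y⁻¹ ∈ H := by rw [← hH]; exact Finset.inv_mem_inv hz.1.1.1
    rw [Finset.mem_product, pow_two]
    exact ⟨Finset.mul_mem_mul hy hz.1.2.1.1, Finset.mul_mem_mul hy hz.1.2.2.1⟩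
  rw [pow_two #(H ^ 2), ← Finset.card_product]
  refine Finset.card_le_mul_card_image_of_maps_to hmaps 2 ?_
  rintro ⟨a, b⟩ -
  let Y : Finset SL(2, F) := {y ∈ traceFinset H t | (y, y * a, y * b) ∈ T}
  have hfiber : {z ∈ T | (z.1⁻¹ * z.2.1, z.1⁻¹ * z.2.2) = (a, b)} ⊆
      Y.image fun y ↦ (y, y * a, y * b) := by
    rintro ⟨y, a', b'⟩ hz
    obtain ⟨hzT, hz⟩ := Finset.mem_filter.mp hz
    obtain ⟨rfl, rfl⟩ := Prod.mk.inj hz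
    refine Finset.mem_image.mpr ⟨y, Finset.mem_filter.mpr ⟨?_, ?_⟩, ?_⟩
    · exact (Finset.mem_product.mp (Finset.mem_filter.mp hzT).1).1
    · simpa only [mul_inv_cancel_left] using hzT
    · simp only [mul_inv_cancel_left]
  refine (Finset.card_le_card hfiber).trans (Finset.card_image_le.trans ?_)
  obtain hempty | ⟨y, hy⟩ := Y.eq_empty_or_nonempty
  · simp [hempty]
  simp only [Y, T, Finset.mem_filter, Finset.mem_product, mem_traceFinset, ne_eq, left_eq_mul,
    mul_right_inj] at hy
  obtain ⟨-, -, ⟨ha, hb, hab⟩, -⟩ := hy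
  refine card_le_two_of_not_haveCommonFixedPoint ht ha hb hab ?_ ?_ <;> intro y hy <;>
    simp only [Y, T, Finset.mem_filter, Finset.mem_product, mem_traceFinset] at hy
  · exact ⟨hy.1.2, hy.2.1.2.1.2, hy.2.1.2.2.2⟩
  · exact hy.2.2.2

open scoped Classical in
lemma card_traceFinset_pow_three_le (hM : ∀ u ≠ 0, ∀ l, #(eigenFinset H u l) ≤ M)
    (hH : H⁻¹ = H) (ht : t ≠ 0) (ht4 : t ^ 2 ≠ 4) :
    #(traceFinset H t) ^ 3 ≤ 2 * #(H ^ 2) ^ 2 + 3 * #(traceFinset H t) ^ 2 +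
      #(traceFinset H t) * (8 * M ^ 2) := by
  set C := traceFinset H t
  let distinct (z : SL(2, F) × SL(2, F) × SL(2, F)) : Prop :=
    z.1 ≠ z.2.1 ∧ z.1 ≠ z.2.2 ∧ z.2.1 ≠ z.2.2
  have hcover : C ×ˢ C ×ˢ C ⊆
      ({z ∈ C ×ˢ C ×ˢ C | distinct z ∧ ¬ HaveCommonFixedPoint z.1 z.2.1 z.2.2} ∪
        {z ∈ C ×ˢ C ×ˢ C | ¬ distinct z}) ∪
          {z ∈ C ×ˢ C ×ˢ C | HaveCommonFixedPoint z.1 z.2.1 z.2.2} := by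
    intro z hz
    simp only [Finset.mem_union, Finset.mem_filter]
    tauto
  calc #C ^ 3 = #(C ×ˢ C ×ˢ C) := by
        rw [Finset.card_product, Finset.card_product]
        ring
    _ ≤ _ := Finset.card_le_card hcover
    _ ≤ _ := Finset.card_union_le _ _
    _ ≤ _ := Nat.add_le_add_right (Finset.card_union_le _ _) _
    _ ≤ _ := Nat.add_le_add (Nat.add_le_add
        (card_filter_not_haveCommonFixedPoint_le hH ht) (card_filter_not_pairwise_ne_le C))
        (card_filter_haveCommonFixedPoint_triple_le hM ht4)

end TripleCount

section Tripling

lemma card_pow_mul_card_pow_le {G : Type*} [Group G] [DecidableEq G] {A : Finset G}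
    (hA : A⁻¹ = A) {m : ℕ} (hm : 3 ≤ m) : #(A ^ m) * #A ^ (m - 3) ≤ #(A ^ 3) ^ (m - 2) := by
  obtain rfl | hne := A.eq_empty_or_nonempty
  · rw [Finset.empty_pow (by omega), Finset.card_empty, zero_mul]
    exact Nat.zero_le _
  have hpos : (0 : ℝ) < #A := by exact_mod_cast hne.card_pos
  have hsmall := Finset.small_pow_of_small_tripling (K := #(A ^ 3) / #A) hm
    (div_mul_cancel₀ _ hpos.ne').ge hA
  rw [div_pow, div_mul_eq_mul_div, le_div_iff₀ (by positivity)] at hsmall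
  have hm' : m - 2 = m - 3 + 1 := by omega
  rw [hm'] at hsmall ⊢
  rw [pow_succ (#A : ℝ), ← mul_assoc] at hsmall
  exact_mod_cast le_of_mul_le_mul_right hsmall hpos

lemma pow_three_le_mul_sq_of_le {N M P Q T : ℕ} (hNQ : N ≤ Q) (hQT : Q ≤ T) (hM : M ^ 3 ≤ 2 * P)
    (hP : P * N ^ 2 ≤ T ^ 3) (hN : N ^ 3 ≤ 2 * Q ^ 2 + 3 * N ^ 2 + N * (8 * M ^ 2)) :
    N ^ 3 ≤ 128 * T ^ 2 := by
  obtain rfl | hN0 := N.eq_zero_or_pos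
  · simp
  rcases le_or_gt N (4 * M) with hle | hlt
  · have hN3 : N ^ 3 ≤ 128 * P := by
      calc N ^ 3 ≤ (4 * M) ^ 3 := Nat.pow_le_pow_left hle 3
        _ = 64 * M ^ 3 := by ring
        _ ≤ 128 * P := by omega
    obtain hT | hT := le_or_gt T (N ^ 2)
    · refine Nat.le_of_mul_le_mul_right ?_ (hN0.trans_le (hNQ.trans hQT))
      calc N ^ 3 * T ≤ 128 * P * N ^ 2 := Nat.mul_le_mul hN3 hT
        _ = 128 * (P * N ^ 2) := mul_assoc _ _ _
        _ ≤ 128 * T ^ 3 := Nat.mul_le_mul_left _ hP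
        _ = 128 * T ^ 2 * T := by ring
    · have hN4 : N ^ 3 ≤ T ^ 2 := by
        calc N ^ 3 ≤ N ^ 4 := Nat.pow_le_pow_right hN0 (by norm_num)
          _ = (N ^ 2) ^ 2 := by ring
          _ ≤ T ^ 2 := Nat.pow_le_pow_left hT.le 2
      omega
  · have hMN : 16 * M ^ 2 ≤ N ^ 2 := by nlinarith
    have habsorb : 2 * (N * (8 * M ^ 2)) ≤ N ^ 3 := by
      calc 2 * (N * (8 * M ^ 2)) = N * (16 * M ^ 2) := by ring
        _ ≤ N * N ^ 2 := Nat.mul_le_mul_left N hMN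
        _ = N ^ 3 := (pow_succ' N 2).symm
    have hNT : N ^ 2 ≤ T ^ 2 := Nat.pow_le_pow_left (hNQ.trans hQT) 2
    have hQT' : Q ^ 2 ≤ T ^ 2 := Nat.pow_le_pow_left hQT 2
    omega

end Tripling

section Irreducible

lemma exists_smul_ne_of_closure_eq_top {G X : Type*} [Group G] [MulAction G X]
    [IsPretransitive G X] [Nontrivial X] {S : Set G} (hS : Subgroup.closure S = ⊤) (P : X) :
    ∃ s ∈ S, s • P ≠ P := by
  by_contra! hfix
  have hstab : stabilizer G P = ⊤ := top_le_iff.mp (hS ▸ (Subgroup.closure_le _).mpr hfix)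
  obtain ⟨Q, hQ⟩ := exists_ne P
  obtain ⟨g, rfl⟩ := exists_smul_eq G P Q
  exact hQ (mem_stabilizer_iff.mp (hstab ▸ Subgroup.mem_top g))

lemma nontrivial_projectivization_fin_two : Nontrivial (ℙ F (Fin 2 → F)) := by
  have hne : (![1, 0] : Fin 2 → F) ≠ 0 := by simp
  obtain ⟨v, hv⟩ := exists_areaForm_ne_zero hne
  have hv0 : v ≠ 0 := by
    rintro rfl
    exact hv (map_zero _)
  exact ⟨_, _, (areaForm_eq_zero_iff_mk_eq_mk hne hv0).not.mp hv⟩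

end Irreducible

theorem stmt_13_general [DecidableEq F] {t : F} (ht : t ≠ 0) (ht4 : t ^ 2 ≠ 4)
    {H : Finset SL(2, F)} (hH : H⁻¹ = H) (hirr : ∀ P : ℙ F (Fin 2 → F), ∃ h ∈ H, h • P ≠ P) :
    #(traceFinset H t) ^ 3 ≤ 128 * #(H ^ 3) ^ 2 := by
  have hNH : #(traceFinset H t) ≤ #H := Finset.card_filter_le _ _
  refine pow_three_le_mul_sq_of_le (M := Nat.nthRoot 3 (2 * #(H ^ 5))) (P := #(H ^ 5))
    (Q := #(H ^ 2)) ?_ ?_ (Nat.pow_nthRoot_le (.inl three_ne_zero)) ?_ ?_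
  · exact hNH.trans (Finset.card_le_card_pow two_ne_zero)
  · exact Finset.card_pow_mono two_ne_zero (by norm_num)
  · calc #(H ^ 5) * #(traceFinset H t) ^ 2 ≤ #(H ^ 5) * #H ^ 2 := by gcongr
      _ ≤ #(H ^ 3) ^ 3 := card_pow_mul_card_pow_le hH (by norm_num)
  · exact card_traceFinset_pow_three_le (fun u hu l ↦ (Nat.le_nthRoot_iff three_ne_zero).mpr
      (card_eigenFinset_pow_three_le hu (hirr _))) hH ht ht4

/-- **Larsen–Pink non-concentration inequality for `SL₂(𝔽_p)` (Theorem `th-lp`).**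
Let `p ≥ 3` be prime and `g ∈ SL₂(𝔽_p)` regular semisimple (`tr(g)² ≠ 4`) with `tr(g) ≠ 0`.
For a symmetric generating set `H` containing `1`, the number of elements of `H` whose
trace equals `tr(g)` (the intersection of `H` with the conjugacy class of `g` over the
algebraic closure) satisfies `|H ∩ 𝐂(g)|³ ≤ 343·|H^(3)|²`, unless `|H^(3)|^28 > |H|^29`. -/
theorem stmt_13 (p : ℕ) (hp : p.Prime) (hp3 : 3 ≤ p)
    (g : Matrix.SpecialLinearGroup (Fin 2) (ZMod p))
    (hg0 : Matrix.trace (g : Matrix (Fin 2) (Fin 2) (ZMod p)) ≠ 0)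
    (hg4 : Matrix.trace (g : Matrix (Fin 2) (Fin 2) (ZMod p)) ^ 2 ≠ 4)
    (H : Finset (Matrix.SpecialLinearGroup (Fin 2) (ZMod p)))
    (hsym : ∀ h ∈ H, h⁻¹ ∈ H)
    (hone : (1 : Matrix.SpecialLinearGroup (Fin 2) (ZMod p)) ∈ H)
    (hgen : Subgroup.closure (H : Set (Matrix.SpecialLinearGroup (Fin 2) (ZMod p))) = ⊤) :
    (H.filter fun x : Matrix.SpecialLinearGroup (Fin 2) (ZMod p) =>
        Matrix.trace (↑x : Matrix (Fin 2) (Fin 2) (ZMod p)) =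
        Matrix.trace (g : Matrix (Fin 2) (Fin 2) (ZMod p))).card ^ 3 ≤
      343 * (H ^ 3 : Finset (Matrix.SpecialLinearGroup (Fin 2) (ZMod p))).card ^ 2 ∨
    H.card ^ 29 < (H ^ 3 : Finset (Matrix.SpecialLinearGroup (Fin 2) (ZMod p))).card ^ 28 := by
  have : Fact p.Prime := ⟨hp⟩
  have := nontrivial_projectivization_fin_two (F := ZMod p)
  have hH : H⁻¹ = H := Finset.ext fun x ↦
    ⟨fun hx ↦ inv_inv x ▸ hsym _ (Finset.mem_inv'.mp hx), fun hx ↦ Finset.mem_inv'.mpr (hsym x hx)⟩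
  exact .inl <| (stmt_13_general hg0 hg4 hH (exists_smul_ne_of_closure_eq_top hgen)).trans <|
    Nat.mul_le_mul_right _ (by norm_num)
end
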